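/- The m^n·n! elements L_1^{e_1} L_2^{e_2} ⋯ L_n^{e_n} a_w, where 0 ≤ e_i < m for each i and w ranges over the symmetric group S_n, form a k-basis of the cyclotomic Hecke algebra H_n(v_1,…,v_m;q). -/

import Mathlib

noncomputable section
open scoped Classical
open scoped Fin.NatCast

namespace Cyclo

/-- The defining relations of the cyclotomic Hecke algebra of type `G(m,1,n)`.
Generator `i : Fin n` corresponds to `a_{i+1}` of the paper. -/
inductive Rel (k : Type) [Field k] (m n : ℕ) (v : Fin m → k) (q : k) :
    FreeAlgebra k (Fin n) → FreeAlgebra k (Fin n) → Prop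
  | cyclo (i : Fin n) (hi : i.1 = 0) :
      Rel k m n v q
        ((List.ofFn fun j : Fin m =>
          (FreeAlgebra.ι k i - algebraMap k (FreeAlgebra k (Fin n)) (v j))).prod) 0
  | quad (i : Fin n) (hi : 1 ≤ i.1) :
      Rel k m n v q
        ((FreeAlgebra.ι k i - algebraMap k (FreeAlgebra k (Fin n)) q) * (FreeAlgebra.ι k i + 1)) 0
  | braid0 (i j : Fin n) (hi : i.1 = 0) (hj : j.1 = 1) :
      Rel k m n v q
        (FreeAlgebra.ι k i * FreeAlgebra.ι k j * FreeAlgebra.ι k i * FreeAlgebra.ι k j)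
        (FreeAlgebra.ι k j * FreeAlgebra.ι k i * FreeAlgebra.ι k j * FreeAlgebra.ι k i)
  | comm (i j : Fin n) (h : i.1 + 2 ≤ j.1) :
      Rel k m n v q (FreeAlgebra.ι k i * FreeAlgebra.ι k j)
        (FreeAlgebra.ι k j * FreeAlgebra.ι k i)
  | braid (i j : Fin n) (hi : 1 ≤ i.1) (hj : j.1 = i.1 + 1) :
      Rel k m n v q
        (FreeAlgebra.ι k j * FreeAlgebra.ι k i * FreeAlgebra.ι k j)
        (FreeAlgebra.ι k i * FreeAlgebra.ι k j * FreeAlgebra.ι k i)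

/-- The cyclotomic Hecke algebra `H_n(v_1,…,v_m;q)` of type `G(m,1,n)`. -/
def CH (k : Type) [Field k] (m n : ℕ) (v : Fin m → k) (q : k) : Type :=
  RingQuot (Rel k m n v q)

instance (k : Type) [Field k] (m n : ℕ) (v : Fin m → k) (q : k) : Ring (CH k m n v q) :=
  inferInstanceAs (Ring (RingQuot (Rel k m n v q)))

instance (k : Type) [Field k] (m n : ℕ) (v : Fin m → k) (q : k) : Algebra k (CH k m n v q) :=
  inferInstanceAs (Algebra k (RingQuot (Rel k m n v q)))

variable (k : Type) [Field k] (m n : ℕ) (v : Fin m → k) (q : k)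

/-- `gen k m n v q t` is the generator `a_{t+1}` (so `gen 0 = a_1`, …, `gen (n-1) = a_n`). -/
def gen [NeZero n] (t : ℕ) : CH k m n v q :=
  RingQuot.mkAlgHom k (Rel k m n v q) (FreeAlgebra.ι k ((t : Fin n)))

/-- `murphyAux k m n v q t` is the Murphy element `L_{t+1}`. -/
def murphyAux [NeZero n] : ℕ → CH k m n v q
  | 0 => gen k m n v q 0
  | t + 1 => q⁻¹ • (gen k m n v q (t + 1) * murphyAux t * gen k m n v q (t + 1))

/-- The Murphy element `L_{i+1}`, for `i : Fin n`. -/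
def murphy [NeZero n] (i : Fin n) : CH k m n v q := murphyAux k m n v q i.1

/-- The product of adjacent transpositions encoded by a list of `0`-based indices:
`t` encodes the transposition `(t, t+1)` (in `0`-based labels), i.e. `s_{t+1}` of the paper. -/
def swapProd [NeZero n] (l : List ℕ) : Equiv.Perm (Fin n) :=
  (l.map fun t => Equiv.swap ((t : Fin n)) (((t + 1 : ℕ) : Fin n))).prod

/-- The corresponding product of generators of the Hecke algebra: the index `t`
(encoding `s_{t+1}`) contributes the generator `a_{t+2} = gen (t+1)`. -/
def genProd [NeZero n] (l : List ℕ) : CH k m n v q :=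
  (l.map fun t => gen k m n v q (t + 1)).prod

/-- `l` is a reduced word for the permutation `w`. -/
def IsReducedWord [NeZero n] (l : List ℕ) (w : Equiv.Perm (Fin n)) : Prop :=
  (∀ t ∈ l, t + 1 < n) ∧ swapProd n l = w ∧
    ∀ l' : List ℕ, (∀ t ∈ l', t + 1 < n) → swapProd n l' = w → l.length ≤ l'.length

/-- `aw` assigns to each permutation `w` the element `a_w` computed from a(ny) reduced word. -/
def IsAW [NeZero n] (aw : Equiv.Perm (Fin n) → CH k m n v q) : Prop :=
  ∀ (w : Equiv.Perm (Fin n)) (l : List ℕ), IsReducedWord n l w → aw w = genProd k m n v q l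



/-- An `m`-multipartition of `n`:  `part c` is the partition `λ^{(c+1)}`
(so `c = m-1` corresponds to the component `λ^{(m)}` of the paper), given by its
(weakly decreasing) list of row lengths `part c 0, part c 1, …`. -/
structure Multipartition (m n : ℕ) where
  part : Fin m → ℕ → ℕ
  mono : ∀ c i, part c (i + 1) ≤ part c i
  bound : ∀ c i, n ≤ i → part c i = 0
  total : (∑ c : Fin m, ∑ i ∈ Finset.range n, part c i) = n

namespace Multipartition

variable {m n : ℕ}

/-- The size `|λ^{(c+1)}|` of a component. -/
def compSize (Λ : Multipartition m n) (c : Fin m) : ℕ :=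
  ∑ i ∈ Finset.range n, Λ.part c i

/-- `|λ^{(1)}| + ⋯ + |λ^{(kk)}|`. -/
def compSizeUpto (Λ : Multipartition m n) (kk : ℕ) : ℕ :=
  ∑ c ∈ Finset.range kk, (if h : c < m then Λ.compSize ⟨c, h⟩ else 0)

/-- The statistic `Σ_{j>k}|λ^{(j)}| + Σ_{j=1}^{l} λ^{(k)}_j` of the dominance order,
where the component `k` (`1`-based) is `c.1 + 1`. -/
def domStat (Λ : Multipartition m n) (c : Fin m) (l : ℕ) : ℕ :=
  (∑ c' ∈ Finset.univ.filter (fun c' : Fin m => c.1 < c'.1), Λ.compSize c') +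
    ∑ j ∈ Finset.range l, Λ.part c j

/-- The dominance order `Λ ⊵ M`. -/
def Dominates (Λ M : Multipartition m n) : Prop :=
  ∀ (c : Fin m) (l : ℕ), M.domStat c l ≤ Λ.domStat c l

/-- Strict dominance `Λ ▷ M`. -/
def StrictDom (Λ M : Multipartition m n) : Prop :=
  Λ.Dominates M ∧ Λ ≠ M

/-- The (0-based) entry of the canonical tableau `t^Λ` in the box in row `i`, column `j`
of component `c`: the boxes are filled row by row, starting with the rows of `λ^{(m)}`,
then those of `λ^{(m-1)}`, and so on. -/
def canonEntry (Λ : Multipartition m n) (c : Fin m) (i j : ℕ) : ℕ :=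
  (∑ c' ∈ Finset.univ.filter (fun c' : Fin m => c.1 < c'.1), Λ.compSize c') +
    (∑ i' ∈ Finset.range i, Λ.part c i') + j

end Multipartition

/-- A standard tableau of shape `Λ`, with (0-based) entries `0, …, n-1`:
`entry c i j` is the entry in the box in row `i`, column `j` of component `c`
(and is normalised to `0` outside the boxes of `Λ`). -/
structure StdTableau {m n : ℕ} (Λ : Multipartition m n) where
  entry : Fin m → ℕ → ℕ → ℕ
  lt_n : ∀ c i j, j < Λ.part c i → entry c i j < n
  inj : ∀ c i j c' i' j', j < Λ.part c i → j' < Λ.part c' i' →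
    entry c i j = entry c' i' j' → (c, i, j) = (c', i', j')
  surj : ∀ x, x < n → ∃ c i j, j < Λ.part c i ∧ entry c i j = x
  row : ∀ c i j, j + 1 < Λ.part c i → entry c i j < entry c i (j + 1)
  col : ∀ c i j, j < Λ.part c (i + 1) → entry c i j < entry c (i + 1) j
  outside : ∀ c i j, ¬ j < Λ.part c i → entry c i j = 0

variable (k : Type) [Field k] (m n : ℕ)

/-- `d` assigns to each standard tableau `T` of each shape `Λ` the permutation `d(T)`
sending, box by box, the entry of the canonical tableau `t^Λ` to the entry of `T`. -/
def IsD [NeZero n] (d : ∀ Λ : Multipartition m n, StdTableau Λ → Equiv.Perm (Fin n)) : Prop :=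
  ∀ (Λ : Multipartition m n) (T : StdTableau Λ) (c : Fin m) (i j : ℕ), j < Λ.part c i →
    d Λ T ((Λ.canonEntry c i j : ℕ) : Fin n) = ((T.entry c i j : ℕ) : Fin n)

/-- Membership in the row stabiliser `S_Λ` of the canonical tableau `t^Λ`. -/
def InRowStab [NeZero n] (Λ : Multipartition m n) (w : Equiv.Perm (Fin n)) : Prop :=
  ∀ (c : Fin m) (i j : ℕ), j < Λ.part c i →
    ∃ j', j' < Λ.part c i ∧
      w ((Λ.canonEntry c i j : ℕ) : Fin n) = ((Λ.canonEntry c i j' : ℕ) : Fin n)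


variable (k : Type) [Field k] (m n : ℕ) (v : Fin m → k) (q : k)

open Multipartition

/-- The element `x_Λ = Σ_{w ∈ S_Λ} a_w`, where `aw` computes the elements `a_w`. -/
def xlam [NeZero n] (aw : Equiv.Perm (Fin n) → CH k m n v q) (Λ : Multipartition m n) :
    CH k m n v q :=
  ∑ w : Equiv.Perm (Fin n), if InRowStab m n Λ w then aw w else 0

/-- `a_kk = n − |λ^{(1)}| − ⋯ − |λ^{(kk)}|`. -/
def aVal (Λ : Multipartition m n) (kk : ℕ) : ℕ := n - Λ.compSizeUpto kk

/-- The element `u_a = ∏_{kk} (L_1 − v_kk)(L_2 − v_kk)⋯(L_{a_kk} − v_kk)`. -/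
def ua [NeZero n] (Λ : Multipartition m n) : CH k m n v q :=
  (List.ofFn fun kk : Fin m =>
    (List.ofFn fun ii : Fin n =>
      if ii.1 < aVal m n Λ (kk.1 + 1) then
        murphy k m n v q ii - algebraMap k (CH k m n v q) (v kk)
      else 1).prod).prod

/-- The element `m_Λ = x_Λ u_a`. -/
def mlam [NeZero n] (aw : Equiv.Perm (Fin n) → CH k m n v q) (Λ : Multipartition m n) :
    CH k m n v q :=
  xlam k m n v q aw Λ * ua k m n v q Λ

/-- The element `m_{st} = a_{d(s)}^* ⬝ m_Λ ⬝ a_{d(t)}`;  here `aw` computes the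
elements `a_w`, `σ` is the `*` anti-involution and `d` computes the permutations `d(t)`. -/
def mst [NeZero n] (aw : Equiv.Perm (Fin n) → CH k m n v q) (σ : CH k m n v q →ₗ[k] CH k m n v q)
    (d : ∀ Λ : Multipartition m n, StdTableau Λ → Equiv.Perm (Fin n))
    {Λ : Multipartition m n} (s t : StdTableau Λ) : CH k m n v q :=
  σ (aw (d Λ s)) * mlam k m n v q aw Λ * aw (d Λ t)

/-- `σ` is the `*` anti-involution: the `k`-linear anti-automorphism fixing the generators. -/
def IsStar [NeZero n] (σ : CH k m n v q →ₗ[k] CH k m n v q) : Prop :=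
  σ 1 = 1 ∧ (∀ x y, σ (x * y) = σ y * σ x) ∧ ∀ t, t < n → σ (gen k m n v q t) = gen k m n v q t

/-- The set of elements `m_{uv}`, for `u, v` standard tableaux of a common shape `M ▷ Λ`. -/
def IsetSet [NeZero n] (aw : Equiv.Perm (Fin n) → CH k m n v q)
    (σ : CH k m n v q →ₗ[k] CH k m n v q)
    (d : ∀ Λ : Multipartition m n, StdTableau Λ → Equiv.Perm (Fin n))
    (Λ : Multipartition m n) : Set (CH k m n v q) :=
  {x | ∃ (M : Multipartition m n) (_ : M.StrictDom Λ) (u v' : StdTableau M),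
    x = mst k m n v q aw σ d u v'}

/-- `I_Λ`, the `k`-span of the `m_{uv}` with shape strictly dominating `Λ`. -/
def Ilam [NeZero n] (aw : Equiv.Perm (Fin n) → CH k m n v q)
    (σ : CH k m n v q →ₗ[k] CH k m n v q)
    (d : ∀ Λ : Multipartition m n, StdTableau Λ → Equiv.Perm (Fin n))
    (Λ : Multipartition m n) : Submodule k (CH k m n v q) :=
  Submodule.span k (IsetSet k m n v q aw σ d Λ)

/-- The image `z_Λ h` of `m_Λ h` in the quotient `H_n / I_Λ`. -/
def zh [NeZero n] (aw : Equiv.Perm (Fin n) → CH k m n v q)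
    (σ : CH k m n v q →ₗ[k] CH k m n v q)
    (d : ∀ Λ : Multipartition m n, StdTableau Λ → Equiv.Perm (Fin n))
    (Λ : Multipartition m n) (h : CH k m n v q) :
    CH k m n v q ⧸ Ilam k m n v q aw σ d Λ :=
  Submodule.Quotient.mk (mlam k m n v q aw Λ * h)

/-- The Specht module `S^Λ = z_Λ ⬝ (H_n/I_Λ)`, as a `k`-submodule of `H_n / I_Λ`. -/
def Specht [NeZero n] (aw : Equiv.Perm (Fin n) → CH k m n v q)
    (σ : CH k m n v q →ₗ[k] CH k m n v q)
    (d : ∀ Λ : Multipartition m n, StdTableau Λ → Equiv.Perm (Fin n))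
    (Λ : Multipartition m n) :
    Submodule k (CH k m n v q ⧸ Ilam k m n v q aw σ d Λ) :=
  Submodule.span k (Set.range (zh k m n v q aw σ d Λ))

/-- The generator `z_Λ h` as an element of the Specht module. -/
def zhS [NeZero n] (aw : Equiv.Perm (Fin n) → CH k m n v q)
    (σ : CH k m n v q →ₗ[k] CH k m n v q)
    (d : ∀ Λ : Multipartition m n, StdTableau Λ → Equiv.Perm (Fin n))
    (Λ : Multipartition m n) (h : CH k m n v q) :
    Specht k m n v q aw σ d Λ :=
  ⟨zh k m n v q aw σ d Λ h, Submodule.subset_span ⟨h, rfl⟩⟩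


section Poly
open MvPolynomial
variable {K : Type} [Field K] {N : ℕ}

/-- interchange two variables -/
def sw (i j : Fin N) : MvPolynomial (Fin N) K →ₐ[K] MvPolynomial (Fin N) K :=
  rename (Equiv.swap i j)

lemma sw_X (i j a : Fin N) : sw (K := K) i j (X a) = X (Equiv.swap i j a) := by simp [sw]
lemma sw_C (i j : Fin N) (c : K) : sw (K := K) i j (C c) = C c := by simp [sw]
lemma sw_Xl (i j : Fin N) : sw (K := K) i j (X i) = X j := by simp [sw]
lemma sw_Xr (i j : Fin N) : sw (K := K) i j (X j) = X i := by simp [sw]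
lemma sw_Xo (i j a : Fin N) (h : a ≠ i) (h' : a ≠ j) : sw (K := K) i j (X a) = X a := by
  simp [sw, Equiv.swap_apply_of_ne_of_ne h h']
lemma sw_sw (i j : Fin N) (f : MvPolynomial (Fin N) K) : sw i j (sw i j f) = f := by
  have h : (Equiv.swap i j : Fin N → Fin N) ∘ (Equiv.swap i j) = id := by
    ext a; simp
  simp [sw, rename_rename, h]

lemma sw_dvd (i j : Fin N) (f : MvPolynomial (Fin N) K) : (X j - X i) ∣ f - sw i j f := by
  induction f using MvPolynomial.induction_on with
  | C a => simp [sw_C]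
  | add p r hp hr =>
    have : p + r - sw i j (p + r) = (p - sw i j p) + (r - sw i j r) := by
      rw [map_add]; ring
    rw [this]; exact dvd_add hp hr
  | mul_X p a hp =>
    have : p * X a - sw i j (p * X a) = (p - sw i j p) * X a
        + sw i j p * (X a - X (Equiv.swap i j a)) := by
      rw [map_mul, sw_X]; ring
    rw [this]
    refine dvd_add (hp.mul_right _) (Dvd.dvd.mul_left ?_ _)
    by_cases h1 : a = i
    · subst h1; rw [Equiv.swap_apply_left]; exact ⟨-1, by ring⟩
    by_cases h2 : a = j
    · subst h2; rw [Equiv.swap_apply_right]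
    · rw [Equiv.swap_apply_of_ne_of_ne h1 h2]; simp

lemma X_sub_ne {i j : Fin N} (h : i ≠ j) : (X j - X i : MvPolynomial (Fin N) K) ≠ 0 := by
  intro h0
  exact h (MvPolynomial.X_injective (R := K) (sub_eq_zero.1 h0)).symm

/-- the divided difference operator -/
def Dd (i j : Fin N) (f : MvPolynomial (Fin N) K) : MvPolynomial (Fin N) K :=
  X j * Classical.choose (sw_dvd i j f)

lemma Dd_spec (i j : Fin N) (f : MvPolynomial (Fin N) K) :
    (X j - X i) * Dd i j f = X j * (f - sw i j f) := by
  have := Classical.choose_spec (sw_dvd i j f)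
  rw [Dd]; conv_rhs => rw [this]
  ring

lemma Dd_unique {i j : Fin N} (h : i ≠ j) {f g : MvPolynomial (Fin N) K}
    (hg : (X j - X i) * g = X j * (f - sw i j f)) : Dd i j f = g :=
  mul_left_cancel₀ (X_sub_ne h) ((Dd_spec i j f).trans hg.symm)

lemma Dd_add {i j : Fin N} (h : i ≠ j) (f g : MvPolynomial (Fin N) K) :
    Dd i j (f + g) = Dd i j f + Dd i j g := by
  apply Dd_unique h
  rw [mul_add, Dd_spec, Dd_spec, map_add]; ring

lemma Dd_C {i j : Fin N} (h : i ≠ j) (c : K) : Dd i j (C c) = 0 := by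
  apply Dd_unique h; simp [sw_C]

lemma Dd_symm_mul {i j : Fin N} (h : i ≠ j) (g f : MvPolynomial (Fin N) K)
    (hg : sw i j g = g) : Dd i j (g * f) = g * Dd i j f := by
  apply Dd_unique h
  rw [map_mul, hg, mul_left_comm, Dd_spec]; ring

lemma Dd_Xl {i j : Fin N} (h : i ≠ j) (f : MvPolynomial (Fin N) K) :
    Dd i j (X i * f) = X j * Dd i j f - X j * f := by
  apply Dd_unique h
  rw [map_mul, sw_Xl, mul_sub, mul_left_comm, Dd_spec]; ring

lemma Dd_Xr {i j : Fin N} (h : i ≠ j) (f : MvPolynomial (Fin N) K) :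
    Dd i j (X j * f) = X i * Dd i j f + X j * f := by
  apply Dd_unique h
  rw [map_mul, sw_Xr, mul_add, mul_left_comm, Dd_spec]; ring

lemma Dd_zero {i j : Fin N} (h : i ≠ j) : Dd i j (0 : MvPolynomial (Fin N) K) = 0 := by
  simpa using Dd_C (K := K) h 0

/-- degree estimates -/
lemma degreeOf_sw (i j a : Fin N) (f : MvPolynomial (Fin N) K) :
    degreeOf a (sw i j f) = degreeOf (Equiv.swap i j a) f := by
  have := degreeOf_rename_of_injective (p := f) (Equiv.swap i j).injective (Equiv.swap i j a)
  simpa [sw] using this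

lemma degreeOf_XX (i j a : Fin N) (h : i ≠ j) : degreeOf a (X j - X i : MvPolynomial (Fin N) K)
    = if a = i ∨ a = j then 1 else 0 := by
  have key : ∀ i j : Fin N, i ≠ j → degreeOf j (X j - X i : MvPolynomial (Fin N) K) = 1 := by
    intro i j h
    rw [sub_eq_add_neg, degreeOf_add_eq_of_degreeOf_lt]
    · simp
    · have : (-X i : MvPolynomial (Fin N) K) = C (-1) * X i := by simp
      have h2 := degreeOf_C_mul_le (X i : MvPolynomial (Fin N) K) j (-1)
      rw [degreeOf_X_of_ne h.symm] at h2
      rw [this]; simp; simpa using h2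
  by_cases hj : a = j
  · subst hj; simp [key i a h]
  by_cases hi : a = i
  · subst hi
    have : (X j - X a : MvPolynomial (Fin N) K) = C (-1) * (X a - X j) := by simp
    have h0 := X_sub_ne (K := K) h.symm
    rw [this, degreeOf_mul_eq (by simp) h0, key j a h.symm]; simp
  · have := degreeOf_sub_le a (X j : MvPolynomial (Fin N) K) (X i)
    rw [degreeOf_X_of_ne hj, degreeOf_X_of_ne hi] at this
    simp [hi, hj]; simpa using this

lemma degreeOf_Dd_le {i j : Fin N} (h : i ≠ j) (a : Fin N) (f : MvPolynomial (Fin N) K) (d : ℕ)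
    (hf : degreeOf a f ≤ d) (hf' : degreeOf (Equiv.swap i j a) f ≤ d) :
    degreeOf a (Dd i j f) ≤ d := by
  by_cases h0 : Dd i j f = 0
  · simp [h0]
  have h1 : degreeOf a (f - sw i j f) ≤ d := by
    refine (degreeOf_sub_le _ _ _).trans ?_
    rw [degreeOf_sw]; exact max_le hf hf'
  have h2 := degreeOf_mul_eq (n := a) (X_sub_ne (K := K) h) h0
  rw [Dd_spec] at h2
  have h3 := degreeOf_mul_le a (X j) (f - sw i j f)
  rw [degreeOf_XX _ _ _ h] at h2
  by_cases hj : a = j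
  · subst hj; simp at h2 h3; omega
  · rw [degreeOf_X_of_ne hj] at h3; omega

lemma degreeOf_Dd_left {i j : Fin N} (h : i ≠ j) (f : MvPolynomial (Fin N) K) (d : ℕ)
    (hf : degreeOf i f ≤ d) (hf' : degreeOf j f ≤ d) (h0 : Dd i j f ≠ 0) :
    degreeOf i (Dd i j f) + 1 ≤ d := by
  have h1 : degreeOf i (f - sw i j f) ≤ d := by
    refine (degreeOf_sub_le _ _ _).trans ?_
    rw [degreeOf_sw]; exact max_le hf (by simpa using hf')
  have h2 := degreeOf_mul_eq (n := i) (X_sub_ne (K := K) h) h0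
  rw [Dd_spec] at h2
  have h3 := degreeOf_mul_le i (X j) (f - sw i j f)
  rw [degreeOf_XX _ _ _ h] at h2
  rw [degreeOf_X_of_ne h] at h3; simp at h2; omega

/-- top coefficient in the variable `i` -/
def tc (d : ℕ) (i : Fin N) (f : MvPolynomial (Fin N) K) : MvPolynomial (Fin N) K :=
  divMonomial f (Finsupp.single i d)

lemma coeff_tc (d : ℕ) (i : Fin N) (f : MvPolynomial (Fin N) K) (e : Fin N →₀ ℕ) :
    coeff e (tc d i f) = coeff (Finsupp.single i d + e) f := coeff_divMonomial _ _ _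

lemma tc_add (d : ℕ) (i : Fin N) (f g : MvPolynomial (Fin N) K) :
    tc d i (f + g) = tc d i f + tc d i g := add_divMonomial _ _ _

lemma tc_C_mul (d : ℕ) (i : Fin N) (c : K) (f : MvPolynomial (Fin N) K) :
    tc d i (C c * f) = C c * tc d i f := by
  ext e; simp [coeff_tc, coeff_C_mul]

lemma tc_X_mul (d : ℕ) {i a : Fin N} (h : a ≠ i) (f : MvPolynomial (Fin N) K) :
    tc d i (X a * f) = X a * tc d i f := by
  ext e
  rw [coeff_tc, coeff_X_mul', coeff_X_mul', coeff_tc]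
  have : a ∈ (Finsupp.single i d + e).support ↔ a ∈ e.support := by
    simp [Finsupp.single_apply, h.symm]
  by_cases ha : a ∈ e.support
  · rw [if_pos ha, if_pos (this.2 ha)]
    congr 1
    ext b
    simp only [Finsupp.coe_tsub, Finsupp.coe_add, Pi.sub_apply, Pi.add_apply]
    have : e a ≠ 0 := by simpa using ha
    by_cases hb : b = a
    · subst hb; simp [Finsupp.single_apply, h.symm]
    · simp [Finsupp.single_apply, Ne.symm hb]
  · rw [if_neg ha, if_neg (fun h => ha (this.1 h))]

lemma tc_aeval_mul (d : ℕ) {i a : Fin N} (h : a ≠ i) (g : Polynomial K)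
    (f : MvPolynomial (Fin N) K) :
    tc d i (Polynomial.aeval (X a) g * f) = Polynomial.aeval (X a) g * tc d i f := by
  induction g using Polynomial.induction_on' with
  | add p r hp hr => rw [map_add, add_mul, tc_add, hp, hr, add_mul]
  | monomial e c =>
    rw [Polynomial.aeval_monomial, algebraMap_eq, mul_assoc, tc_C_mul, mul_assoc]
    congr 1
    induction e with
    | zero => simp
    | succ e ih => rw [pow_succ', mul_assoc, tc_X_mul d h, ih, mul_assoc]

lemma tc_sw (d : ℕ) (i j : Fin N) (f : MvPolynomial (Fin N) K) :
    tc d i (sw i j f) = sw i j (tc d j f) := by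
  induction f using MvPolynomial.induction_on' with
  | add p r hp hr => simp only [map_add, tc_add, hp, hr]
  | monomial e c =>
    have key : ∀ (e' : Fin N →₀ ℕ) (i : Fin N), tc d i (monomial e' c) =
        if d ≤ e' i then monomial (e' - Finsupp.single i d) c else 0 := by
      intro e' i
      ext b
      rw [coeff_tc, coeff_monomial]
      split_ifs with h1 h2 h2
      · subst h1; simp
      · subst h1; simp at h2
      · rw [coeff_monomial, if_neg]
        rintro rfl
        apply h1
        rw [add_comm, tsub_add_cancel_of_le]
        simpa using h2
      · simp
    have hs : ∀ e' : Fin N →₀ ℕ, sw i j (monomial e' c) =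
        monomial (e'.mapDomain (Equiv.swap i j)) c := by
      intro e'; simp [sw, rename_monomial]
    have hm : ∀ (e' : Fin N →₀ ℕ) (a : Fin N), e'.mapDomain (Equiv.swap i j) a
        = e' (Equiv.swap i j a) := by
      intro e' a
      have := Finsupp.mapDomain_apply (Equiv.swap i j).injective e' (Equiv.swap i j a)
      simpa using this
    rw [hs, key, key, hm, Equiv.swap_apply_left]
    split_ifs with h1
    · rw [hs]
      congr 2
      ext a
      rw [hm, Finsupp.tsub_apply, Finsupp.tsub_apply, hm]
      congr 1
      simp only [Finsupp.single_apply]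
      congr 1
      apply propext
      constructor
      · intro h
        simpa using congrArg (Equiv.swap i j) h
      · intro h
        simpa using congrArg (Equiv.swap i j) h
    · simp

lemma tc_eq_zero (d : ℕ) (i : Fin N) (f : MvPolynomial (Fin N) K) (h : degreeOf i f + 1 ≤ d) :
    tc d i f = 0 := by
  ext e
  rw [coeff_tc, coeff_zero]
  by_contra h0
  have := monomial_le_degreeOf i (mem_support_iff.2 h0)
  simp at this; omega

lemma tc_zero (d : ℕ) (i : Fin N) : tc d i (0 : MvPolynomial (Fin N) K) = 0 := by
  ext e; simp [coeff_tc]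

lemma degreeOf_tc_le (d : ℕ) (i a : Fin N) (f : MvPolynomial (Fin N) K) :
    degreeOf a (tc d i f) ≤ degreeOf a f := by
  rw [degreeOf_le_iff]
  intro e he
  rw [mem_support_iff, coeff_tc, ← mem_support_iff] at he
  have := monomial_le_degreeOf a he
  simp at this; omega

lemma degreeOf_tc_self (d : ℕ) (i : Fin N) (f : MvPolynomial (Fin N) K) (h : degreeOf i f ≤ d) :
    degreeOf i (tc d i f) = 0 := by
  rw [← Nat.le_zero, degreeOf_le_iff]
  intro e he
  rw [mem_support_iff, coeff_tc, ← mem_support_iff] at he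
  have := monomial_le_degreeOf i he
  simp at this; omega

lemma degreeOf_aeval_le (i : Fin N) (g : Polynomial K) :
    degreeOf i (Polynomial.aeval (X i : MvPolynomial (Fin N) K) g) ≤ g.natDegree := by
  rw [Polynomial.aeval_eq_sum_range]
  refine (degreeOf_sum_le _ _ _).trans (Finset.sup_le fun e he => ?_)
  rw [smul_eq_C_mul]
  refine (degreeOf_C_mul_le _ _ _).trans ?_
  rw [degreeOf_X_self_pow]
  simp at he; omega

lemma degreeOf_aeval_ne (i a : Fin N) (h : a ≠ i) (g : Polynomial K) :
    degreeOf a (Polynomial.aeval (X i : MvPolynomial (Fin N) K) g) = 0 := by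
  rw [← Nat.le_zero, Polynomial.aeval_eq_sum_range]
  refine (degreeOf_sum_le _ _ _).trans (Finset.sup_le fun e he => ?_)
  rw [smul_eq_C_mul]
  refine (degreeOf_C_mul_le _ _ _).trans ?_
  rw [degreeOf_X_pow_of_ne _ h]

lemma lead_rem (g : Polynomial K) (d : ℕ) (hg : g.Monic) (hd : g.natDegree = d + 1) :
    (Polynomial.X ^ (d + 1) - g).natDegree ≤ d := by
  have h1 : (Polynomial.X ^ (d + 1) - g).degree < (Polynomial.X ^ (d+1) : Polynomial K).degree := by
    apply Polynomial.degree_sub_lt_left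
    · rw [Polynomial.degree_eq_natDegree hg.ne_zero, hd]; simp
    · simp
    · simp [hg.leadingCoeff]
  rw [Polynomial.degree_X_pow] at h1
  by_cases h0 : Polynomial.X ^ (d + 1) - g = 0
  · simp [h0]
  · have := (Polynomial.natDegree_lt_iff_degree_lt h0).2 h1
    omega

lemma degreeOf_aeval_eq (i : Fin N) (g : Polynomial K) (d : ℕ) (hg : g.Monic)
    (hd : g.natDegree = d + 1) :
    degreeOf i (Polynomial.aeval (X i : MvPolynomial (Fin N) K) g) = d + 1 := by
  have : Polynomial.aeval (X i : MvPolynomial (Fin N) K) g = X i ^ (d + 1) +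
      (Polynomial.aeval (X i : MvPolynomial (Fin N) K) (g - Polynomial.X ^ (d + 1))) := by
    rw [map_sub]; simp
  have h2 := degreeOf_aeval_le i (g - Polynomial.X ^ (d + 1))
  rw [← Polynomial.natDegree_neg, neg_sub] at h2
  have h3 := lead_rem g d hg hd
  rw [this, degreeOf_add_eq_of_degreeOf_lt]
  · simp
  · rw [degreeOf_X_self_pow]; omega

/-- polynomials with all exponents at most `d` -/
def Sm (d : ℕ) (f : MvPolynomial (Fin N) K) : Prop := ∀ a, degreeOf a f ≤ d

/-- multiplication by `X i`, reduced modulo `g (X i)` -/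
def Ared (d : ℕ) (g : Polynomial K) (i : Fin N) (f : MvPolynomial (Fin N) K) :
    MvPolynomial (Fin N) K := X i * f - Polynomial.aeval (X i) g * tc d i f

lemma Sm.add {d : ℕ} {f g : MvPolynomial (Fin N) K} (hf : Sm d f) (hg : Sm d g) :
    Sm d (f + g) := fun a => (degreeOf_add_le _ _ _).trans (max_le (hf a) (hg a))
lemma Sm.sub {d : ℕ} {f g : MvPolynomial (Fin N) K} (hf : Sm d f) (hg : Sm d g) :
    Sm d (f - g) := fun a => (degreeOf_sub_le _ _ _).trans (max_le (hf a) (hg a))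
lemma Sm.C_mul {d : ℕ} {f : MvPolynomial (Fin N) K} (c : K) (hf : Sm d f) :
    Sm d (C c * f) := fun a => (degreeOf_C_mul_le _ _ _).trans (hf a)
lemma Sm.zero (d : ℕ) : Sm d (0 : MvPolynomial (Fin N) K) := fun a => by simp
lemma Sm.sw {d : ℕ} {f : MvPolynomial (Fin N) K} (i j : Fin N) (hf : Sm d f) :
    Sm d (sw i j f) := fun a => by rw [degreeOf_sw]; exact hf _
lemma Sm.Dd {d : ℕ} {f : MvPolynomial (Fin N) K} {i j : Fin N} (h : i ≠ j) (hf : Sm d f) :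
    Sm d (Dd i j f) := fun a => degreeOf_Dd_le h _ _ _ (hf _) (hf _)

lemma Sm.tc_Dd {d : ℕ} {f : MvPolynomial (Fin N) K} {i j : Fin N} (h : i ≠ j) (hf : Sm d f) :
    tc d i (Cyclo.Dd i j f) = 0 := by
  by_cases h0 : Cyclo.Dd i j f = 0
  · rw [h0, tc_zero]
  · exact tc_eq_zero _ _ _ (degreeOf_Dd_left h f d (hf _) (hf _) h0)

lemma Sm.Ared {d : ℕ} {f : MvPolynomial (Fin N) K} {g : Polynomial K} (hg : g.Monic)
    (hd : g.natDegree = d + 1) (i : Fin N) (hf : Sm d f) : Sm d (Ared d g i f) := by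
  have e1 : Cyclo.Ared d g i f = X i * (f - X i ^ d * tc d i f) +
      Polynomial.aeval (X i) (Polynomial.X ^ (d + 1) - g) * tc d i f := by
    rw [Cyclo.Ared, map_sub, map_pow, Polynomial.aeval_X]; ring
  rw [e1]
  intro a
  refine (degreeOf_add_le _ _ _).trans (max_le ?_ ?_)
  · rw [degreeOf_le_iff]
    intro e he
    rw [mem_support_iff, coeff_X_mul'] at he
    split_ifs at he with hi
    swap
    · exact absurd rfl he
    have hei : e i ≠ 0 := by simpa using hi
    rw [coeff_sub, X_pow_eq_monomial, coeff_monomial_mul', one_mul, coeff_tc] at he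
    have hs : ¬ (Finsupp.single i d ≤ e - Finsupp.single i 1) := by
      intro hle
      rw [if_pos hle, add_tsub_cancel_of_le hle, sub_self] at he
      exact he rfl
    rw [if_neg hs, sub_zero, ← mem_support_iff] at he
    have h3 := (monomial_le_degreeOf a he).trans (hf a)
    simp at hs h3
    by_cases ha : a = i
    · subst ha; omega
    · rw [Finsupp.single_apply, if_neg (Ne.symm ha)] at h3; omega
  · refine (degreeOf_mul_le _ _ _).trans ?_
    by_cases ha : a = i
    · subst ha
      rw [degreeOf_tc_self _ _ _ (hf a)]
      exact (degreeOf_aeval_le _ _).trans (lead_rem g d hg hd)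
    · rw [degreeOf_aeval_ne _ _ ha, zero_add]
      exact (degreeOf_tc_le _ _ _ _).trans (hf a)

lemma Sm.unique {d : ℕ} {f : MvPolynomial (Fin N) K} {g : Polynomial K} (hg : g.Monic)
    (hd : g.natDegree = d + 1) (i : Fin N) (hf : Sm d f)
    (h : Polynomial.aeval (X i) g ∣ f) : f = 0 := by
  obtain ⟨r, rfl⟩ := h
  by_contra h0
  have h1 := left_ne_zero_of_mul h0
  have h2 := right_ne_zero_of_mul h0
  have h3 := hf i
  rw [degreeOf_mul_eq h1 h2, degreeOf_aeval_eq _ _ d hg hd] at h3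
  omega

end Poly

section Ops
open MvPolynomial
variable {K : Type} [Field K] {N : ℕ}

/-- the space `P ⊗ k[S_n]` -/
abbrev VV (K : Type) [Field K] (N : ℕ) : Type := Equiv.Perm (Fin N) → MvPolynomial (Fin N) K

/-- the Demazure-Lusztig type operators -/
def Tm (q : K) (i j : Fin N) (h : i ≠ j) : VV K N →ₗ[K] VV K N where
  toFun F := fun w => (if w⁻¹ j < w⁻¹ i then
      sw i j (F (Equiv.swap i j * w)) + C (q - 1) * sw i j (F w)
      else C q * sw i j (F (Equiv.swap i j * w))) + C (q - 1) * Dd i j (F w)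
  map_add' F G := by
    funext w
    simp only [Pi.add_apply, map_add, Dd_add h]
    split_ifs <;> ring
  map_smul' c F := by
    funext w
    have h1 : ∀ f : MvPolynomial (Fin N) K, Dd i j (C c * f) = C c * Dd i j f :=
      fun f => Dd_symm_mul h _ _ (sw_C i j c)
    simp only [Pi.smul_apply, smul_eq_C_mul, map_mul, sw_C, h1, RingHom.id_apply]
    split_ifs <;> ring

lemma Tm_apply (q : K) (i j : Fin N) (h : i ≠ j) (F : VV K N) (w : Equiv.Perm (Fin N)) :
    Tm q i j h F w = (if w⁻¹ j < w⁻¹ i then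
      sw i j (F (Equiv.swap i j * w)) + C (q - 1) * sw i j (F w)
      else C q * sw i j (F (Equiv.swap i j * w))) + C (q - 1) * Dd i j (F w) := rfl

lemma Tm_symm (q : K) {i j : Fin N} (h : i ≠ j) (F : VV K N) (g : MvPolynomial (Fin N) K)
    (hg : sw i j g = g) : Tm q i j h (g • F) = g • Tm q i j h F := by
  funext w
  simp only [Tm_apply, Pi.smul_apply, smul_eq_mul, map_mul, hg, Dd_symm_mul h _ _ hg]
  split_ifs <;> ring

lemma Tm_Xl (q : K) {i j : Fin N} (h : i ≠ j) (F : VV K N) :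
    Tm q i j h ((X i : MvPolynomial (Fin N) K) • F) =
      (X j : MvPolynomial (Fin N) K) • (Tm q i j h F - (q - 1) • F) := by
  funext w
  simp only [Tm_apply, Pi.smul_apply, Pi.sub_apply, smul_eq_mul, map_mul, sw_Xl, Dd_Xl h,
    smul_eq_C_mul]
  split_ifs <;> ring

lemma Tm_Xr (q : K) {i j : Fin N} (h : i ≠ j) (F : VV K N) :
    Tm q i j h ((X j : MvPolynomial (Fin N) K) • F) =
      (X i : MvPolynomial (Fin N) K) • Tm q i j h F
        + (X j : MvPolynomial (Fin N) K) • ((q - 1) • F) := by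
  funext w
  simp only [Tm_apply, Pi.smul_apply, Pi.add_apply, smul_eq_mul, map_mul, sw_Xr, Dd_Xr h,
    smul_eq_C_mul]
  split_ifs <;> ring

lemma Tm_Xo (q : K) {i j a : Fin N} (h : i ≠ j) (h1 : a ≠ i) (h2 : a ≠ j) (F : VV K N) :
    Tm q i j h ((X a : MvPolynomial (Fin N) K) • F) =
      (X a : MvPolynomial (Fin N) K) • Tm q i j h F :=
  Tm_symm q h F _ (sw_Xo _ _ _ h1 h2)

/-- the basis vector `1 ⊗ w` -/
def dl (w : Equiv.Perm (Fin N)) : VV K N := Pi.single w 1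

lemma Dd_one {i j : Fin N} (h : i ≠ j) : Dd i j (1 : MvPolynomial (Fin N) K) = 0 := by
  simpa using Dd_C (K := K) h 1

lemma Tm_dl (q : K) {i j : Fin N} (h : i ≠ j) (w : Equiv.Perm (Fin N)) :
    Tm q i j h (dl w) = if w⁻¹ i < w⁻¹ j then dl (Equiv.swap i j * w)
      else q • dl (Equiv.swap i j * w) + (q - 1) • dl w := by
  have hij : w⁻¹ i ≠ w⁻¹ j := fun e => h (w⁻¹.injective e)
  funext u
  have hne : Equiv.swap i j * w ≠ w := by
    intro e
    have := mul_eq_right.1 e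
    rw [Equiv.swap_eq_one_iff] at this
    exact h this
  have e1 : (Equiv.swap i j * u = w) ↔ u = Equiv.swap i j * w := by
    constructor
    · rintro rfl; simp [← mul_assoc]
    · rintro rfl; simp [← mul_assoc]
  rw [Tm_apply]
  simp only [dl, Pi.single_apply, e1]
  by_cases hu : u = Equiv.swap i j * w
  · subst hu
    simp only [if_true, hne, if_false, map_one, map_zero, Dd_zero h, mul_zero, add_zero,
      mul_inv_rev, Equiv.swap_inv, Equiv.Perm.mul_apply, Equiv.swap_apply_left,
      Equiv.swap_apply_right, mul_one]
    split_ifs with h1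
    · simp
    · simp [smul_eq_C_mul, hne]
  · simp only [hu, if_false, map_zero, mul_zero, zero_add]
    by_cases hw : u = w
    · subst hw
      simp only [if_true, map_one, Dd_one h, mul_zero, add_zero, mul_one]
      rcases lt_or_gt_of_ne hij with h1 | h1
      · rw [if_neg h1.not_gt, if_pos h1]; simp [hne.symm]
      · rw [if_pos h1, if_neg h1.not_gt]; simp [hne.symm, smul_eq_C_mul]
    · simp only [hw, if_false, map_zero, mul_zero, Dd_zero h, add_zero]
      split_ifs <;> simp [hu, hw]

lemma op_zero (Δ : VV K N →ₗ[K] VV K N) (σ : Fin N → Fin N)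
    (hX : ∀ a F, Δ ((X a : MvPolynomial (Fin N) K) • F) =
      (X (σ a) : MvPolynomial (Fin N) K) • Δ F)
    (h1 : ∀ w : Equiv.Perm (Fin N), Δ (dl w) = 0) : Δ = 0 := by
  have key : ∀ (f : MvPolynomial (Fin N) K) (w : Equiv.Perm (Fin N)), Δ (f • dl w) = 0 := by
    intro f w
    induction f using MvPolynomial.induction_on with
    | C a =>
      have : (C a : MvPolynomial (Fin N) K) • (dl w : VV K N) = a • dl w := by
        funext u; simp [smul_eq_C_mul]
      rw [this, map_smul, h1, smul_zero]
    | add p r hp hr => rw [add_smul, map_add, hp, hr, add_zero]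
    | mul_X p a hp => rw [mul_comm, mul_smul, hX, hp, smul_zero]
  refine LinearMap.ext fun F => ?_
  have : F = ∑ w : Equiv.Perm (Fin N), F w • (dl w : VV K N) := by
    funext u
    rw [Finset.sum_apply]
    simp [dl, Pi.single_apply]
  rw [this, map_sum]
  simp [key]

lemma smul_smul_comm' (c : K) (f : MvPolynomial (Fin N) K) (F : VV K N) :
    c • f • F = f • c • F := smul_comm _ _ _

lemma Tm_quad (q : K) {i j : Fin N} (h : i ≠ j) (F : VV K N) :
    Tm q i j h (Tm q i j h F) = (q - 1) • Tm q i j h F + q • F := by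
  have := op_zero (Tm q i j h ∘ₗ Tm q i j h - (q - 1) • Tm q i j h - q • LinearMap.id) id ?_ ?_
  · have := LinearMap.congr_fun this F
    simp only [LinearMap.sub_apply, LinearMap.comp_apply, LinearMap.smul_apply,
      LinearMap.id_apply, LinearMap.zero_apply] at this
    linear_combination (exp := 1) this
  · intro a F
    simp only [LinearMap.sub_apply, LinearMap.comp_apply, LinearMap.smul_apply,
      LinearMap.id_apply, id]
    by_cases h1 : a = i
    · subst h1
      simp only [Tm_Xl, Tm_Xr, map_sub, map_smul, smul_sub, smul_add, smul_smul_comm' (K := K)]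
      module
    by_cases h2 : a = j
    · subst h2
      simp only [Tm_Xl, Tm_Xr, map_add, map_sub, map_smul, smul_sub, smul_add,
        smul_smul_comm' (K := K)]
      module
    · simp only [Tm_Xo q h h1 h2, smul_sub, smul_smul_comm' (K := K)]
  · intro w
    simp only [LinearMap.sub_apply, LinearMap.comp_apply, LinearMap.smul_apply,
      LinearMap.id_apply]
    have hij : w⁻¹ i ≠ w⁻¹ j := fun e => h (w⁻¹.injective e)
    rcases lt_or_gt_of_ne hij with h1 | h1
    · simp only [Tm_dl, h1, h1.not_gt, mul_inv_rev, Equiv.swap_inv, Equiv.Perm.mul_apply, Equiv.swap_apply_left,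
        Equiv.swap_apply_right, Equiv.swap_mul_self_mul, if_true, if_false, map_add, map_smul]
      module
    · simp only [Tm_dl, h1, h1.not_gt, mul_inv_rev, Equiv.swap_inv, Equiv.Perm.mul_apply, Equiv.swap_apply_left,
        Equiv.swap_apply_right, Equiv.swap_mul_self_mul, if_true, if_false, map_add, map_smul]
      module

lemma Tm_TXT (q : K) {i j : Fin N} (h : i ≠ j) (F : VV K N) :
    Tm q i j h ((X i : MvPolynomial (Fin N) K) • Tm q i j h F) =
      (X j : MvPolynomial (Fin N) K) • (q • F) := by
  rw [Tm_Xl, Tm_quad, add_sub_cancel_left]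

lemma Tm_comm (q : K) {i j a b : Fin N} (h : i ≠ j) (h' : a ≠ b) (h1 : a ≠ i) (h2 : a ≠ j)
    (h3 : b ≠ i) (h4 : b ≠ j) (F : VV K N) :
    Tm q i j h (Tm q a b h' F) = Tm q a b h' (Tm q i j h F) := by
  have := op_zero (Tm q i j h ∘ₗ Tm q a b h' - Tm q a b h' ∘ₗ Tm q i j h)
    (Equiv.swap i j * Equiv.swap a b : Equiv.Perm (Fin N)) ?_ ?_
  · have := LinearMap.congr_fun this F
    simp only [LinearMap.sub_apply, LinearMap.comp_apply, LinearMap.zero_apply] at this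
    exact sub_eq_zero.1 this
  · intro c F
    simp only [LinearMap.sub_apply, LinearMap.comp_apply, Equiv.Perm.mul_apply]
    by_cases c1 : c = i
    · subst c1
      rw [Equiv.swap_apply_of_ne_of_ne h1.symm h3.symm, Equiv.swap_apply_left,
        Tm_Xo q h' h1.symm h3.symm]
      simp only [Tm_Xl, Tm_Xo q h' h2.symm h4.symm, smul_sub, map_sub, map_smul]
      module
    by_cases c2 : c = j
    · subst c2
      rw [Equiv.swap_apply_of_ne_of_ne h2.symm h4.symm, Equiv.swap_apply_right,
        Tm_Xo q h' h2.symm h4.symm]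
      simp only [Tm_Xr, Tm_Xo q h' h1.symm h3.symm, Tm_Xo q h' h2.symm h4.symm, smul_sub, map_add,
        map_smul]
      module
    by_cases c3 : c = a
    · subst c3
      rw [Equiv.swap_apply_left, Equiv.swap_apply_of_ne_of_ne h3 h4, Tm_Xo q h h1 h2]
      simp only [Tm_Xl, Tm_Xo q h h3 h4, smul_sub, map_sub, map_smul]
      module
    by_cases c4 : c = b
    · subst c4
      rw [Equiv.swap_apply_right, Equiv.swap_apply_of_ne_of_ne h1 h2, Tm_Xo q h h3 h4]
      simp only [Tm_Xr, Tm_Xo q h h1 h2, Tm_Xo q h h3 h4, smul_sub, map_add, map_smul]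
      module
    · rw [Equiv.swap_apply_of_ne_of_ne c3 c4, Equiv.swap_apply_of_ne_of_ne c1 c2]
      simp only [Tm_Xo q h c1 c2, Tm_Xo q h' c3 c4, smul_sub]
  · intro w
    have hc : Equiv.swap i j * (Equiv.swap a b * w) = Equiv.swap a b * (Equiv.swap i j * w) := by
      rw [← mul_assoc, ← mul_assoc]
      congr 1
      exact (Equiv.Perm.disjoint_swap_swap (by
        simp [h, h', h1.symm, h2.symm, h3.symm, h4.symm])).commute
    have s1 := Equiv.swap_apply_of_ne_of_ne h1 h2
    have s2 := Equiv.swap_apply_of_ne_of_ne h3 h4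
    have s3 := Equiv.swap_apply_of_ne_of_ne h1.symm h3.symm
    have s4 := Equiv.swap_apply_of_ne_of_ne h2.symm h4.symm
    simp only [LinearMap.sub_apply, LinearMap.comp_apply]
    by_cases l1 : w⁻¹ i < w⁻¹ j <;> by_cases l2 : w⁻¹ a < w⁻¹ b <;>
      simp only [Tm_dl, l1, l2, s1, s2, s3, s4, hc, mul_inv_rev, Equiv.swap_inv, Equiv.Perm.mul_apply, Equiv.swap_apply_left,
        Equiv.swap_apply_right, Equiv.swap_mul_self_mul, if_true, if_false, map_add, map_smul] <;>
      module

lemma Tm_braid (q : K) {i j l : Fin N} (h : i ≠ j) (h' : j ≠ l) (h'' : i ≠ l) (F : VV K N) :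
    Tm q i j h (Tm q j l h' (Tm q i j h F)) = Tm q j l h' (Tm q i j h (Tm q j l h' F)) := by
  have := op_zero (Tm q i j h ∘ₗ Tm q j l h' ∘ₗ Tm q i j h
      - Tm q j l h' ∘ₗ Tm q i j h ∘ₗ Tm q j l h')
    (Equiv.swap i l : Equiv.Perm (Fin N)) ?_ ?_
  · have := LinearMap.congr_fun this F
    simp only [LinearMap.sub_apply, LinearMap.comp_apply, LinearMap.zero_apply] at this
    exact sub_eq_zero.1 this
  · intro c F
    simp only [LinearMap.sub_apply, LinearMap.comp_apply]
    have o1 := Tm_Xo q h' h h''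
    have o2 := Tm_Xo q h h''.symm h'.symm
    by_cases c1 : c = i
    · subst c1
      simp only [Equiv.swap_apply_left, Tm_Xl, o1, o2, map_sub, map_smul, smul_sub, Tm_quad]
      module
    by_cases c2 : c = j
    · subst c2
      rw [Equiv.swap_apply_of_ne_of_ne h.symm h']
      simp only [Tm_Xl, Tm_Xr, o1, o2, map_sub, map_add, map_smul, smul_sub, smul_add, Tm_quad]
      module
    by_cases c3 : c = l
    · subst c3
      simp only [Equiv.swap_apply_right, Tm_Xl, Tm_Xr, o1, o2, map_sub, map_add, map_smul,
        smul_sub, smul_add, Tm_quad]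
      module
    · rw [Equiv.swap_apply_of_ne_of_ne c1 c3]
      simp only [Tm_Xo q h c1 c2, Tm_Xo q h' c2 c3, smul_sub]
  · intro w
    have hc : Equiv.swap i j * (Equiv.swap j l * (Equiv.swap i j * w)) =
        Equiv.swap j l * (Equiv.swap i j * (Equiv.swap j l * w)) := by
      simp only [← mul_assoc]
      congr 1
      have e1 := Equiv.swap_mul_swap_mul_swap h'.symm h''.symm
      have e2 := Equiv.swap_mul_swap_mul_swap h h''
      rw [Equiv.swap_comm j i, Equiv.swap_comm l j] at e1
      rw [e1, e2, Equiv.swap_comm]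
    have s1 := Equiv.swap_apply_of_ne_of_ne h h''
    have s2 := Equiv.swap_apply_of_ne_of_ne h''.symm h'.symm
    have n1 : w⁻¹ i ≠ w⁻¹ j := fun e => h (w⁻¹.injective e)
    have n2 : w⁻¹ j ≠ w⁻¹ l := fun e => h' (w⁻¹.injective e)
    have n3 : w⁻¹ i ≠ w⁻¹ l := fun e => h'' (w⁻¹.injective e)
    simp only [LinearMap.sub_apply, LinearMap.comp_apply]
    rcases lt_or_gt_of_ne n1 with l1 | l1 <;> rcases lt_or_gt_of_ne n2 with l2 | l2 <;>
      rcases lt_or_gt_of_ne n3 with l3 | l3 <;>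
      first
      | (exfalso; omega)
      | (simp only [Tm_dl, l1, l2, l3, l1.not_gt, l2.not_gt, l3.not_gt, s1, s2, hc,
          mul_inv_rev, Equiv.swap_inv, Equiv.Perm.mul_apply, Equiv.swap_apply_left,
        Equiv.swap_apply_right, Equiv.swap_mul_self_mul, if_true, if_false, map_add, map_smul]
         module)

end Ops

section Cyc
open MvPolynomial
variable {K : Type} [Field K] {N : ℕ}

/-- vectors all of whose exponents are at most `d` -/
def WW (K : Type) [Field K] (N : ℕ) (d : ℕ) : Submodule K (VV K N) where
  carrier := {F | ∀ w, Sm d (F w)}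
  add_mem' h1 h2 := fun w => (h1 w).add (h2 w)
  zero_mem' := fun _ => Sm.zero d
  smul_mem' c F h := fun w => by
    rw [Pi.smul_apply, smul_eq_C_mul]; exact (h w).C_mul c

lemma Tm_mem {d : ℕ} (q : K) {i j : Fin N} (h : i ≠ j) {F : VV K N} (hF : F ∈ WW K N d) :
    Tm q i j h F ∈ WW K N d := by
  intro w
  rw [Tm_apply]
  refine Sm.add ?_ (((hF w).Dd h).C_mul _)
  split_ifs
  · exact ((hF _).sw i j).add (((hF _).sw i j).C_mul _)
  · exact ((hF _).sw i j).C_mul _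

/-- top coefficients -/
def tv (d : ℕ) (i : Fin N) (F : VV K N) : VV K N := fun w => tc d i (F w)

/-- the first generator -/
def Am (d : ℕ) (g : Polynomial K) (i : Fin N) : VV K N →ₗ[K] VV K N where
  toFun F := fun w => Ared d g i (F w)
  map_add' F G := by
    funext w; simp only [Pi.add_apply, Ared, tc_add]; ring
  map_smul' c F := by
    funext w
    simp only [Pi.smul_apply, Ared, smul_eq_C_mul, tc_C_mul, RingHom.id_apply]; ring

lemma Am_eq (d : ℕ) (g : Polynomial K) (i : Fin N) (F : VV K N) :
    Am d g i F = (X i : MvPolynomial (Fin N) K) • F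
      - (Polynomial.aeval (X i : MvPolynomial (Fin N) K) g) • tv d i F := rfl

lemma Am_mem {d : ℕ} {g : Polynomial K} (hg : g.Monic) (hd : g.natDegree = d + 1) (i : Fin N)
    {F : VV K N} (hF : F ∈ WW K N d) : Am d g i F ∈ WW K N d :=
  fun w => (hF w).Ared hg hd i

lemma WW_unique {d : ℕ} {g : Polynomial K} (hg : g.Monic) (hd : g.natDegree = d + 1) (i : Fin N)
    {F : VV K N} (hF : F ∈ WW K N d) (Z : VV K N)
    (h : F = (Polynomial.aeval (X i : MvPolynomial (Fin N) K) g) • Z) : F = 0 := by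
  funext w
  exact (hF w).unique hg hd i ⟨Z w, by rw [h]; rfl⟩

lemma sw_aeval (i j a : Fin N) (g : Polynomial K) :
    sw i j (Polynomial.aeval (X a : MvPolynomial (Fin N) K) g) =
      Polynomial.aeval (X (Equiv.swap i j a)) g := by
  rw [← Polynomial.aeval_algHom_apply, sw_X]

lemma Am_Tm_comm {d : ℕ} {g : Polynomial K} (hg : g.Monic) (hd : g.natDegree = d + 1)
    (q : K) {a b i : Fin N} (h : a ≠ b) (h1 : i ≠ a) (h2 : i ≠ b)
    {F : VV K N} (hF : F ∈ WW K N d) :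
    Am d g i (Tm q a b h F) = Tm q a b h (Am d g i F) := by
  apply sub_eq_zero.1
  apply WW_unique hg hd i (Submodule.sub_mem _ (Am_mem hg hd i (Tm_mem q h hF))
    (Tm_mem q h (Am_mem hg hd i hF))) (Tm q a b h (tv d i F) - tv d i (Tm q a b h F))
  rw [Am_eq, Am_eq, map_sub, Tm_Xo q h h1 h2, Tm_symm q h]
  · module
  · rw [sw_aeval, Equiv.swap_apply_of_ne_of_ne h1 h2]

/-- the operator `Tm` without its divided difference part -/
def T0 (q : K) (i j : Fin N) (F : VV K N) : VV K N := fun w => if w⁻¹ j < w⁻¹ i then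
      sw i j (F (Equiv.swap i j * w)) + C (q - 1) * sw i j (F w)
      else C q * sw i j (F (Equiv.swap i j * w))

lemma T0_smul (q : K) (i j : Fin N) (F : VV K N) (f : MvPolynomial (Fin N) K) :
    T0 q i j (f • F) = sw i j f • T0 q i j F := by
  funext w
  simp only [T0, Pi.smul_apply, smul_eq_mul, map_mul]
  split_ifs <;> ring

lemma T0_sub (q : K) (i j : Fin N) (F G : VV K N) :
    T0 q i j (F - G) = T0 q i j F - T0 q i j G := by
  funext w
  simp only [T0, Pi.sub_apply, map_sub]
  split_ifs <;> ring

lemma tv_Tm {d : ℕ} (q : K) {i j : Fin N} (h : i ≠ j) {F : VV K N} (hF : F ∈ WW K N d) :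
    tv d i (Tm q i j h F) = T0 q i j (tv d j F) := by
  funext w
  simp only [tv, T0, Tm_apply, tc_add, tc_C_mul, (hF w).tc_Dd h, mul_zero, add_zero]
  split_ifs <;> simp only [tc_add, tc_C_mul, tc_sw]

lemma tv_Am {d : ℕ} {g : Polynomial K} {i j : Fin N} (h : i ≠ j) (F : VV K N) :
    tv d j (Am d g i F) = (X i : MvPolynomial (Fin N) K) • tv d j F
      - (Polynomial.aeval (X i : MvPolynomial (Fin N) K) g) • tv d j (tv d i F) := by
  funext w
  have e : Am d g i F w = X i * F w + C (-1) * (Polynomial.aeval (X i) g * tc d i (F w)) := by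
    simp [Am_eq, tv]; ring
  simp only [tv, e, tc_add, tc_C_mul, tc_X_mul d h, tc_aeval_mul d h, Pi.sub_apply, Pi.smul_apply,
    smul_eq_mul]
  simp; ring

lemma TATF {d : ℕ} {g : Polynomial K}
    (q : K) {i j : Fin N} (h : i ≠ j) {F : VV K N} (hF : F ∈ WW K N d) :
    Tm q i j h (Am d g i (Tm q i j h F)) = (X j : MvPolynomial (Fin N) K) • (q • F)
      - Tm q i j h ((Polynomial.aeval (X i : MvPolynomial (Fin N) K) g) •
        T0 q i j (tv d j F)) := by
  rw [Am_eq, map_sub, Tm_TXT, tv_Tm q h hF]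

lemma Am_braid {d : ℕ} {g : Polynomial K} (hg : g.Monic) (hd : g.natDegree = d + 1)
    (q : K) {i j : Fin N} (h : i ≠ j) {F : VV K N} (hF : F ∈ WW K N d) :
    Am d g i (Tm q i j h (Am d g i (Tm q i j h F))) =
      Tm q i j h (Am d g i (Tm q i j h (Am d g i F))) := by
  have hA := Am_mem hg hd i hF
  apply sub_eq_zero.1
  apply WW_unique hg hd i (Submodule.sub_mem _
    (Am_mem hg hd i (Tm_mem q h (Am_mem hg hd i (Tm_mem q h hF))))
    (Tm_mem q h (Am_mem hg hd i (Tm_mem q h hA))))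
    (- tv d i (Tm q i j h (Am d g i (Tm q i j h F))) +
      (X j : MvPolynomial (Fin N) K) • (q • tv d i F) +
      (X j : MvPolynomial (Fin N) K) • ((q - 1) • T0 q i j (tv d j F)) -
      (Polynomial.aeval (X j : MvPolynomial (Fin N) K) g) •
        Tm q i j h (T0 q i j (tv d j (tv d i F))))
  rw [TATF q h hA, tv_Am h, T0_sub, T0_smul, T0_smul, sw_Xl, sw_aeval, Equiv.swap_apply_left,
    Am_eq d g i (Tm q i j h (Am d g i (Tm q i j h F)))]
  generalize tv d i (Tm q i j h (Am d g i (Tm q i j h F))) = c1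
  rw [TATF q h hF, Am_eq]
  generalize T0 q i j (tv d j F) = G
  generalize T0 q i j (tv d j (tv d i F)) = Y
  have e1 : Tm q i j h ((Polynomial.aeval (X i : MvPolynomial (Fin N) K) g) •
      (X j : MvPolynomial (Fin N) K) • G) =
      (X i : MvPolynomial (Fin N) K) • Tm q i j h
        ((Polynomial.aeval (X i : MvPolynomial (Fin N) K) g) • G)
      + (X j : MvPolynomial (Fin N) K) • ((q - 1) •
        ((Polynomial.aeval (X i : MvPolynomial (Fin N) K) g) • G)) := by
    rw [smul_comm, Tm_Xr]
  have e2 : Tm q i j h ((Polynomial.aeval (X i : MvPolynomial (Fin N) K) g) •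
      (Polynomial.aeval (X j : MvPolynomial (Fin N) K) g) • Y) =
      (Polynomial.aeval (X i : MvPolynomial (Fin N) K) g) •
      (Polynomial.aeval (X j : MvPolynomial (Fin N) K) g) • Tm q i j h Y := by
    rw [smul_smul, Tm_symm, smul_smul]
    rw [map_mul, sw_aeval, sw_aeval, Equiv.swap_apply_left, Equiv.swap_apply_right, mul_comm]
  have e3 : (Polynomial.aeval (X i : MvPolynomial (Fin N) K) g) •
      ((X j : MvPolynomial (Fin N) K) • G - (Polynomial.aeval (X j : MvPolynomial (Fin N) K) g) • Y) =
      (Polynomial.aeval (X i : MvPolynomial (Fin N) K) g) • (X j : MvPolynomial (Fin N) K) • G -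
      (Polynomial.aeval (X i : MvPolynomial (Fin N) K) g) •
        (Polynomial.aeval (X j : MvPolynomial (Fin N) K) g) • Y := smul_sub _ _ _
  rw [e3, map_sub, e1, e2]
  module

/-- `Tm` restricted to `WW` -/
def TW (d : ℕ) (q : K) (i j : Fin N) (h : i ≠ j) : Module.End K (WW K N d) :=
  (Tm q i j h).restrict (fun _ hF => Tm_mem q h hF)

/-- `Am` restricted to `WW` -/
def AW {d : ℕ} {g : Polynomial K} (hg : g.Monic) (hd : g.natDegree = d + 1) (i : Fin N) :
    Module.End K (WW K N d) :=
  (Am d g i).restrict (fun _ hF => Am_mem hg hd i hF)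

lemma AW_aeval {d : ℕ} {g : Polynomial K} (hg : g.Monic) (hd : g.natDegree = d + 1) (i : Fin N) :
    Polynomial.aeval (AW hg hd i) g = 0 := by
  have key : ∀ (r : Polynomial K) (F : WW K N d), ∃ Z : VV K N,
      ((Polynomial.aeval (AW hg hd i) r F : WW K N d) : VV K N) =
        (Polynomial.aeval (X i : MvPolynomial (Fin N) K) r) • (F : VV K N) +
        (Polynomial.aeval (X i : MvPolynomial (Fin N) K) g) • Z := by
    intro r F
    induction r using Polynomial.induction_on' with
    | add p r hp hr =>
      obtain ⟨Z1, h1⟩ := hp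
      obtain ⟨Z2, h2⟩ := hr
      refine ⟨Z1 + Z2, ?_⟩
      rw [map_add, LinearMap.add_apply, Submodule.coe_add, h1, h2, map_add]
      module
    | monomial e c =>
      induction e with
      | zero =>
        refine ⟨0, ?_⟩
        funext w
        simp [smul_eq_C_mul]
      | succ e ih =>
        obtain ⟨Z, hZ⟩ := ih
        have e1 : (Polynomial.monomial (e + 1)) c =
          Polynomial.X * (Polynomial.monomial e) c := by simp
        rw [e1, map_mul, map_mul, Module.End.mul_apply, Polynomial.aeval_X, Polynomial.aeval_X]
        generalize (Polynomial.aeval (AW hg hd i)) ((Polynomial.monomial e) c) F = Y at hZ ⊢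
        have e2 : ((AW hg hd i Y : WW K N d) : VV K N) = Am d g i Y := rfl
        refine ⟨(X i : MvPolynomial (Fin N) K) • Z - tv d i Y, ?_⟩
        rw [e2, Am_eq]
        generalize tv d i (Y : VV K N) = U
        rw [hZ]
        module
  refine LinearMap.ext fun F => ?_
  obtain ⟨Z, hZ⟩ := key g F
  apply Subtype.ext
  exact WW_unique hg hd i (Subtype.mem _) ((F : VV K N) + Z) (by rw [hZ, smul_add])

end Cyc

section Rep
open MvPolynomial
variable (K : Type) [Field K] (M N : ℕ) (V : Fin M → K) (Q : K)

/-- the polynomial satisfied by the first generator -/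
def gp {K : Type} [Field K] {M : ℕ} (V : Fin M → K) : Polynomial K :=
  ∏ j : Fin M, (Polynomial.X - Polynomial.C (V j))

variable {K M N V Q}

lemma gp_monic : (gp V).Monic := Polynomial.monic_prod_X_sub_C _ _

lemma gp_natDegree [NeZero M] : (gp V).natDegree = (M - 1) + 1 := by
  have h : 0 < M := Nat.pos_of_ne_zero (NeZero.ne M)
  rw [gp, Polynomial.natDegree_finsetProd_X_sub_C_eq_card]
  simp; omega

lemma aeval_gp {R : Type} [Ring R] [Algebra K R] (x : R) :
    Polynomial.aeval x (gp V) = (List.ofFn fun j => x - algebraMap K R (V j)).prod := by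
  rw [gp, ← List.prod_ofFn, map_list_prod, List.map_ofFn]
  simp [Function.comp_def]

lemma aeval_gp_end {R : Type} [AddCommGroup R] [Module K R] (x : Module.End K R) :
    Polynomial.aeval x (gp V) = (List.ofFn fun j => x - algebraMap K _ (V j)).prod := by
  rw [gp, ← List.prod_ofFn, map_list_prod, List.map_ofFn]
  simp [Function.comp_def]

/-- the predecessor index -/
def pre (i : Fin N) : Fin N := ⟨i.1 - 1, lt_of_le_of_lt (Nat.sub_le _ _) i.2⟩

lemma pre_ne {i : Fin N} (h : i.1 ≠ 0) : pre i ≠ i := by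
  intro e
  have := congrArg Fin.val e
  simp only [pre] at this
  omega

variable (Q) in
/-- images of the generators -/
def opg [NeZero M] (V : Fin M → K) (i : Fin N) : Module.End K (WW K N (M - 1)) :=
  if h : i.1 = 0 then AW (gp_monic (V := V)) gp_natDegree i else TW (M - 1) Q (pre i) i (pre_ne h)

lemma opg_zero [NeZero M] {i : Fin N} (h : i.1 = 0) :
    opg Q V i = AW (gp_monic (V := V)) gp_natDegree i := dif_pos h

lemma opg_pos [NeZero M] {i : Fin N} (h : i.1 ≠ 0) :
    opg Q V i = TW (M - 1) Q (pre i) i (pre_ne h) := dif_neg h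

lemma TW_coe (d : ℕ) (q : K) (i j : Fin N) (h : i ≠ j) (F : WW K N d) :
    ((TW d q i j h F : WW K N d) : VV K N) = Tm q i j h F := rfl

lemma AW_coe {d : ℕ} {g : Polynomial K} (hg : g.Monic) (hd : g.natDegree = d + 1) (i : Fin N)
    (F : WW K N d) : ((AW hg hd i F : WW K N d) : VV K N) = Am d g i F := rfl

variable (K M N V Q) in
/-- the representation -/
def repF [NeZero M] : FreeAlgebra K (Fin N) →ₐ[K] Module.End K (WW K N (M - 1)) :=
  FreeAlgebra.lift K (opg Q V)

lemma repF_rel [NeZero M] ⦃x y : FreeAlgebra K (Fin N)⦄ (h : Rel K M N V Q x y) :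
    repF K M N V Q x = repF K M N V Q y := by
  induction h with
  | cyclo i hi =>
    have := AW_aeval (gp_monic (V := V)) gp_natDegree i
    rw [map_list_prod, List.map_ofFn, map_zero, ← this]
    rw [aeval_gp_end]
    rw [← opg_zero (Q := Q) hi]
    simp [repF, Function.comp_def]
  | quad i hi =>
    have h0 : i.1 ≠ 0 := by omega
    simp only [map_mul, map_sub, map_add, map_one, map_zero, AlgHom.commutes, repF,
      FreeAlgebra.lift_ι_apply, opg_pos h0]
    refine LinearMap.ext fun F => Subtype.ext ?_
    have := Tm_quad Q (pre_ne h0) (F : VV K N)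
    simp only [Module.End.mul_apply, LinearMap.sub_apply, LinearMap.add_apply,
      Module.algebraMap_end_apply, Module.End.one_apply, Submodule.coe_sub, Submodule.coe_add,
      TW_coe, Submodule.coe_smul, LinearMap.zero_apply, Submodule.coe_zero, map_add, this]
    module
  | braid0 i j hi hj =>
    have h0 : j.1 ≠ 0 := by omega
    simp only [map_mul, repF, FreeAlgebra.lift_ι_apply, opg_pos h0, opg_zero hi]
    have hp : pre j = i := Fin.ext (by simp [pre]; omega)
    have hn := pre_ne h0
    subst hp
    refine LinearMap.ext fun F => Subtype.ext ?_
    exact Am_braid gp_monic gp_natDegree Q hn F.2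
  | comm i j hij =>
    have h0 : j.1 ≠ 0 := by omega
    by_cases hi : i.1 = 0
    · simp only [map_mul, repF, FreeAlgebra.lift_ι_apply, opg_pos h0, opg_zero hi]
      refine LinearMap.ext fun F => Subtype.ext ?_
      refine Am_Tm_comm gp_monic gp_natDegree Q (pre_ne h0) ?_ ?_ F.2 <;>
      · intro e
        have := congrArg Fin.val e
        try simp only [pre] at this
        omega
    · simp only [map_mul, repF, FreeAlgebra.lift_ι_apply, opg_pos h0, opg_pos hi]
      refine LinearMap.ext fun F => Subtype.ext ?_
      refine Tm_comm Q (pre_ne hi) (pre_ne h0) ?_ ?_ ?_ ?_ F.1 <;>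
      · intro e
        have := congrArg Fin.val e
        try simp only [pre] at this
        omega
  | braid i j hi hj =>
    have h0 : j.1 ≠ 0 := by omega
    have h1 : i.1 ≠ 0 := by omega
    simp only [map_mul, repF, FreeAlgebra.lift_ι_apply, opg_pos h0, opg_pos h1]
    have hp : pre j = i := Fin.ext (by simp [pre]; omega)
    have hn := pre_ne h0
    subst hp
    refine LinearMap.ext fun F => Subtype.ext ?_
    refine (Tm_braid Q (pre_ne h1) (pre_ne h0) ?_ F.1).symm
    intro e
    have := congrArg Fin.val e
    simp only [pre] at this
    omega

variable (K M N V Q) in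
/-- the representation of the cyclotomic Hecke algebra -/
def rep [NeZero M] : CH K M N V Q →ₐ[K] Module.End K (WW K N (M - 1)) :=
  RingQuot.liftAlgHom K ⟨repF K M N V Q, repF_rel⟩

lemma rep_gen [NeZero M] [NeZero N] (t : ℕ) :
    rep K M N V Q (gen K M N V Q t) = opg Q V (t : Fin N) := by
  have : rep K M N V Q (gen K M N V Q t) = repF K M N V Q (FreeAlgebra.ι K (t : Fin N)) :=
    RingQuot.liftAlgHom_mkAlgHom_apply K _ _ _
  rw [this, repF, FreeAlgebra.lift_ι_apply]
end Rep

section Len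
variable {N : ℕ}

/-- inversions -/
def invs (w : Equiv.Perm (Fin N)) : Finset (Fin N × Fin N) :=
  Finset.univ.filter fun p => p.1 < p.2 ∧ w⁻¹ p.2 < w⁻¹ p.1

lemma swap_lt_swap {i j : Fin N} (hij : j.1 = i.1 + 1) {a b : Fin N} (h : a < b)
    (hne : ¬ (a = i ∧ b = j)) : Equiv.swap i j a < Equiv.swap i j b := by
  rw [Equiv.swap_apply_def, Equiv.swap_apply_def]
  simp only [Fin.ext_iff, Fin.lt_def] at *
  split_ifs <;> omega

lemma invs_swap {i j : Fin N} (hij : j.1 = i.1 + 1) (w : Equiv.Perm (Fin N))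
    (h : w⁻¹ i < w⁻¹ j) : (invs (Equiv.swap i j * w)).card = (invs w).card + 1 := by
  have hlt : i < j := by rw [Fin.lt_def]; omega
  have e : invs (Equiv.swap i j * w) = insert (i, j) ((invs w).map
      ((Equiv.swap i j).prodCongr (Equiv.swap i j)).toEmbedding) := by
    ext ⟨a, b⟩
    rw [Finset.mem_insert, Finset.mem_map_equiv]
    simp only [invs, Finset.mem_filter, Finset.mem_univ, true_and, mul_inv_rev, Equiv.swap_inv,
      Equiv.Perm.mul_apply, Equiv.prodCongr_symm, Equiv.prodCongr_apply, Equiv.symm_swap,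
      Prod.map, Prod.mk.injEq]
    constructor
    · rintro ⟨h1, h2⟩
      by_cases hab : a = i ∧ b = j
      · exact Or.inl hab
      · exact Or.inr ⟨swap_lt_swap hij h1 hab, h2⟩
    · rintro (⟨rfl, rfl⟩ | ⟨h1, h2⟩)
      · refine ⟨hlt, ?_⟩
        rw [Equiv.swap_apply_left, Equiv.swap_apply_right]
        exact h
      · refine ⟨?_, h2⟩
        have := swap_lt_swap hij h1 ?_
        · simpa using this
        · rintro ⟨e1, e2⟩
          rw [e1, e2] at h2
          exact absurd h h2.not_gt
  rw [e, Finset.card_insert_of_notMem, Finset.card_map]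
  rw [Finset.mem_map_equiv]
  simp only [invs, Finset.mem_filter, Finset.mem_univ, true_and, 
      Equiv.prodCongr_symm, Equiv.prodCongr_apply, Equiv.symm_swap,
      Prod.map, Equiv.swap_apply_left, Equiv.swap_apply_right]
  rintro ⟨h1, -⟩
  exact absurd hlt h1.not_gt

lemma invs_swap' {i j : Fin N} (hij : j.1 = i.1 + 1) (w : Equiv.Perm (Fin N))
    (h : w⁻¹ j < w⁻¹ i) : (invs w).card = (invs (Equiv.swap i j * w)).card + 1 := by
  have := invs_swap hij (Equiv.swap i j * w) (by simpa using h)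
  rwa [Equiv.swap_mul_self_mul] at this

lemma inv_ne (w : Equiv.Perm (Fin N)) {i j : Fin N} (h : i ≠ j) : w⁻¹ i ≠ w⁻¹ j :=
  fun e => h (w⁻¹.injective e)

lemma invs_one : (invs (1 : Equiv.Perm (Fin N))).card = 0 := by
  rw [Finset.card_eq_zero, invs, Finset.filter_eq_empty_iff]
  rintro ⟨a, b⟩ - ⟨h1, h2⟩
  exact absurd h1 (by simpa using h2.le)

lemma eq_one_of_no_descent (w : Equiv.Perm (Fin N))
    (h : ∀ i j : Fin N, j.1 = i.1 + 1 → w⁻¹ i < w⁻¹ j) : w = 1 := by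
  cases N with
  | zero => exact Subsingleton.elim _ _
  | succ n =>
    have hm : StrictMono (w⁻¹ : Equiv.Perm (Fin (n + 1))) :=
      Fin.strictMono_iff_lt_succ.2 fun i => h _ _ (by simp)
    have e : (hm.orderIsoOfSurjective _ (w⁻¹).surjective) = OrderIso.refl _ :=
      Subsingleton.elim _ _
    rw [← inv_eq_one]
    ext a
    have := DFunLike.congr_fun e a
    simpa [Fin.ext_iff] using this

variable [NeZero N]

lemma cast_val_lt {t : ℕ} (h : t < N) : ((t : Fin N)).1 = t := by
  rw [Fin.val_natCast, Nat.mod_eq_of_lt h]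

lemma succ_val {t : ℕ} (h : t + 1 < N) : (((t + 1 : ℕ) : Fin N)).1 = ((t : Fin N)).1 + 1 := by
  rw [cast_val_lt h, cast_val_lt (by omega)]

lemma t_ne {t : ℕ} (h : t + 1 < N) : (t : Fin N) ≠ ((t + 1 : ℕ) : Fin N) := by
  intro e
  have := succ_val h
  rw [← e] at this
  omega

lemma swapProd_cons (t : ℕ) (l : List ℕ) : swapProd N (t :: l) =
    Equiv.swap (t : Fin N) ((t + 1 : ℕ) : Fin N) * swapProd N l := by
  simp [swapProd]

lemma invs_le_length (l : List ℕ) (hl : ∀ t ∈ l, t + 1 < N) :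
    (invs (swapProd N l)).card ≤ l.length := by
  induction l with
  | nil => simp [swapProd, invs_one]
  | cons t l ih =>
    have ht : t + 1 < N := hl t (by simp)
    have := ih fun s hs => hl s (by simp [hs])
    rw [swapProd_cons, List.length_cons]
    rcases lt_or_gt_of_ne (inv_ne (swapProd N l) (t_ne ht)) with h | h
    · rw [invs_swap (succ_val ht) _ h]; omega
    · have := invs_swap' (succ_val ht) _ h; omega

lemma exists_word (r : ℕ) (w : Equiv.Perm (Fin N)) (hr : (invs w).card = r) :
    ∃ l : List ℕ, (∀ t ∈ l, t + 1 < N) ∧ swapProd N l = w ∧ l.length = r := by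
  induction r generalizing w with
  | zero =>
    refine ⟨[], by simp, ?_, rfl⟩
    symm
    have : swapProd N [] = 1 := by simp [swapProd]
    rw [this]
    apply eq_one_of_no_descent
    intro i j hij
    by_contra h
    have hne : i ≠ j := by rintro rfl; omega
    have h2 := lt_of_le_of_ne (not_lt.1 h) (inv_ne w hne.symm)
    have := invs_swap' hij w h2
    omega
  | succ r ih =>
    by_cases h : ∃ i j : Fin N, j.1 = i.1 + 1 ∧ w⁻¹ j < w⁻¹ i
    · obtain ⟨i, j, hij, h2⟩ := h
      have e := invs_swap' hij w h2
      obtain ⟨l, hl, hw, hlen⟩ := ih (Equiv.swap i j * w) (by omega)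
      refine ⟨i.1 :: l, ?_, ?_, by simp [hlen]⟩
      · intro t ht
        rcases List.mem_cons.1 ht with rfl | ht
        · have := j.2; omega
        · exact hl t ht
      · have e1 : ((i.1 : ℕ) : Fin N) = i := Fin.ext (cast_val_lt i.2)
        have e2 : ((i.1 + 1 : ℕ) : Fin N) = j := by
          rw [← hij]; exact Fin.ext (cast_val_lt j.2)
        rw [swapProd_cons, e1, e2, hw, Equiv.swap_mul_self_mul]
    · have : w = 1 := by
        apply eq_one_of_no_descent
        intro i j hij
        by_contra h3
        have hne : i ≠ j := by rintro rfl; omega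
        exact h ⟨i, j, hij, lt_of_le_of_ne (not_lt.1 h3) (inv_ne w hne.symm)⟩
      rw [this, invs_one] at hr
      omega

lemma reduced_of_length {l : List ℕ} {w : Equiv.Perm (Fin N)} (hl : ∀ t ∈ l, t + 1 < N)
    (hw : swapProd N l = w) (hlen : l.length = (invs w).card) : IsReducedWord N l w := by
  refine ⟨hl, hw, fun l' h1 h2 => ?_⟩
  rw [hlen, ← h2]
  exact invs_le_length l' h1

variable {K : Type} [Field K] {M : ℕ} {V : Fin M → K} {Q : K}

lemma aw_one {aw : Equiv.Perm (Fin N) → CH K M N V Q} (haw : IsAW K M N V Q aw) : aw 1 = 1 := by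
  rw [haw 1 [] (reduced_of_length (by simp) (by simp [swapProd]) (by simp [invs_one]))]
  simp [genProd]

lemma aw_asc {aw : Equiv.Perm (Fin N) → CH K M N V Q} (haw : IsAW K M N V Q aw)
    {t : ℕ} (ht : t + 1 < N) (w : Equiv.Perm (Fin N))
    (h : w⁻¹ (t : Fin N) < w⁻¹ ((t + 1 : ℕ) : Fin N)) :
    aw (Equiv.swap (t : Fin N) ((t + 1 : ℕ) : Fin N) * w) = gen K M N V Q (t + 1) * aw w := by
  obtain ⟨l, hl, hw, hlen⟩ := exists_word _ w rfl
  rw [haw w l (reduced_of_length hl hw hlen), haw _ (t :: l) (reduced_of_length ?_ ?_ ?_)]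
  · simp [genProd]
  · intro s hs
    rcases List.mem_cons.1 hs with rfl | hs
    · exact ht
    · exact hl s hs
  · rw [swapProd_cons, hw]
  · rw [invs_swap (succ_val ht) _ h, List.length_cons, hlen]

/-- induction along ascents -/
lemma perm_ind {P : Equiv.Perm (Fin N) → Prop} (h1 : P 1)
    (hs : ∀ (t : ℕ), t + 1 < N → ∀ w : Equiv.Perm (Fin N),
      w⁻¹ (t : Fin N) < w⁻¹ ((t + 1 : ℕ) : Fin N) → P w →
        P (Equiv.swap (t : Fin N) ((t + 1 : ℕ) : Fin N) * w)) (w : Equiv.Perm (Fin N)) : P w := by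
  obtain ⟨l, hl, hw, hlen⟩ := exists_word _ w rfl
  induction l generalizing w with
  | nil => rw [← hw]; simpa [swapProd] using h1
  | cons t l ih =>
    have ht : t + 1 < N := hl t (by simp)
    have hl' : ∀ s ∈ l, s + 1 < N := fun s hs => hl s (by simp [hs])
    have hle := invs_le_length l hl'
    rw [swapProd_cons] at hw
    rw [List.length_cons] at hlen
    rcases lt_or_gt_of_ne (inv_ne (swapProd N l) (t_ne ht)) with h | h
    · have e := invs_swap (succ_val ht) _ h
      rw [hw] at e
      rw [← hw]
      exact hs t ht _ h (ih _ hl' rfl (by omega))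
    · have e := invs_swap' (succ_val ht) _ h
      rw [hw] at e
      omega

end Len

section Indep
open MvPolynomial
variable {K : Type} [Field K] {M N : ℕ} {V : Fin M → K} {Q : K} [NeZero M] [NeZero N]

lemma rep_gen_succ {t : ℕ} (ht : t + 1 < N) :
    rep K M N V Q (gen K M N V Q (t + 1)) =
      TW (M - 1) Q (t : Fin N) ((t + 1 : ℕ) : Fin N) (t_ne ht) := by
  have h0 : (((t + 1 : ℕ) : Fin N)).1 ≠ 0 := by rw [succ_val ht]; omega
  have hp : pre ((t + 1 : ℕ) : Fin N) = (t : Fin N) := Fin.ext (by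
    simp only [pre]; rw [succ_val ht]; omega)
  rw [rep_gen, opg_pos h0]
  congr 1

lemma rep_murphy (hq : Q ≠ 0) (t : ℕ) (ht : t < N) (F : WW K N (M - 1))
    (hF : tv (M - 1) (t : Fin N) (F : VV K N) = 0) :
    ((rep K M N V Q (murphyAux K M N V Q t) F : WW K N (M - 1)) : VV K N) =
      (X (t : Fin N) : MvPolynomial (Fin N) K) • (F : VV K N) := by
  induction t generalizing F with
  | zero =>
    rw [murphyAux, rep_gen, opg_zero (by simp), AW_coe, Am_eq, hF, smul_zero, sub_zero]
  | succ t ih =>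
    rw [murphyAux, map_smul, map_mul, map_mul, rep_gen_succ ht, LinearMap.smul_apply,
      Module.End.mul_apply, Module.End.mul_apply, Submodule.coe_smul, TW_coe, ih (by omega), TW_coe,
      Tm_TXT, smul_smul_comm', smul_smul, inv_mul_cancel₀ hq, one_smul]
    rw [TW_coe, tv_Tm Q _ F.2, hF]
    funext w
    simp [T0]

/-- monomial basis vectors -/
def mo (s : Fin N →₀ ℕ) (w : Equiv.Perm (Fin N)) : VV K N := Pi.single w (monomial s 1)

lemma tv_mo {d : ℕ} {t : Fin N} {s : Fin N →₀ ℕ} (h : s t < d) (w : Equiv.Perm (Fin N)) :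
    tv d t (mo s w : VV K N) = 0 := by
  funext u
  simp only [tv, mo, Pi.zero_apply]
  by_cases hu : u = w
  · subst hu
    rw [Pi.single_eq_same]
    ext e
    rw [coeff_tc, coeff_monomial, if_neg, coeff_zero]
    intro e1
    rw [e1] at h
    simp at h
  · rw [Pi.single_eq_of_ne hu, tc_zero]

lemma X_mo (t : Fin N) (s : Fin N →₀ ℕ) (w : Equiv.Perm (Fin N)) :
    (X t : MvPolynomial (Fin N) K) • (mo s w : VV K N) = mo (Finsupp.single t 1 + s) w := by
  funext u
  by_cases hu : u = w
  · subst hu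
    simp [mo, X, monomial_mul]
  · simp [mo, hu]

lemma rep_murphy_mo (hq : Q ≠ 0) (i : Fin N) (s : Fin N →₀ ℕ) (w : Equiv.Perm (Fin N))
    (r : ℕ) (hs : s i + r ≤ M - 1) (F : WW K N (M - 1)) (hF : (F : VV K N) = mo s w) :
    ((rep K M N V Q (murphy K M N V Q i ^ r) F : WW K N (M - 1)) : VV K N) =
      mo (Finsupp.single i r + s) w := by
  have hi : ((i.1 : ℕ) : Fin N) = i := Fin.ext (cast_val_lt i.2)
  induction r with
  | zero => simp [hF]
  | succ r ih =>
    have ih' := ih (by omega)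
    rw [pow_succ', map_mul, Module.End.mul_apply]
    generalize rep K M N V Q (murphy K M N V Q i ^ r) F = G at ih'
    rw [murphy, rep_murphy hq _ i.2, ih', hi, X_mo, ← add_assoc, ← Finsupp.single_add, add_comm 1 r]
    rw [ih', hi]
    apply tv_mo
    simp; omega

lemma rep_list (hq : Q ≠ 0) (e : Fin N → Fin M) (l : List (Fin N)) (hl : l.Nodup)
    (w : Equiv.Perm (Fin N)) (F : WW K N (M - 1)) (hF : (F : VV K N) = mo 0 w) :
    ((rep K M N V Q ((l.map fun i => murphy K M N V Q i ^ (e i).1).prod) F : WW K N (M - 1)) :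
      VV K N) = mo ((l.map fun i => Finsupp.single i (e i).1).sum) w := by
  induction l with
  | nil => simp [hF]
  | cons i l ih =>
    rw [List.nodup_cons] at hl
    rw [List.map_cons, List.prod_cons, map_mul, Module.End.mul_apply, List.map_cons, List.sum_cons]
    refine rep_murphy_mo hq i _ w _ ?_ _ (ih hl.2)
    have : ((l.map fun i => Finsupp.single i (e i).1).sum) i = 0 := by
      have hn := hl.1
      clear ih hl
      induction l with
      | nil => simp
      | cons j l ih =>
        simp only [List.mem_cons, not_or] at hn
        rw [List.map_cons, List.sum_cons, Finsupp.add_apply, ih hn.2,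
          Finsupp.single_eq_of_ne hn.1]
    have h2 := (e i).2
    omega

lemma dl_mem (w : Equiv.Perm (Fin N)) (d : ℕ) : (dl w : VV K N) ∈ WW K N d := by
  intro u
  by_cases hu : u = w
  · subst hu
    intro a
    simp [dl]
  · simp only [dl, Pi.single_eq_of_ne hu]
    exact Sm.zero d

lemma rep_aw {aw : Equiv.Perm (Fin N) → CH K M N V Q} (haw : IsAW K M N V Q aw)
    (w : Equiv.Perm (Fin N)) :
    ((rep K M N V Q (aw w) ⟨dl 1, dl_mem 1 _⟩ : WW K N (M - 1)) : VV K N) = dl w := by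
  induction w using perm_ind with
  | h1 => rw [aw_one haw, map_one, Module.End.one_apply]
  | hs t ht w h ih =>
    rw [aw_asc haw ht w h, map_mul, Module.End.mul_apply, rep_gen_succ ht, TW_coe, ih, Tm_dl,
      if_pos h]

lemma dl_eq_mo (w : Equiv.Perm (Fin N)) : (dl w : VV K N) = mo 0 w := by
  simp [dl, mo]

/-- exponent vector -/
def ex (e : Fin N → Fin M) : Fin N →₀ ℕ := Finsupp.equivFunOnFinite.symm fun i => (e i).1

lemma sum_ex (e : Fin N → Fin M) :
    ((List.finRange N).map fun i => Finsupp.single i (e i).1).sum = ex e := by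
  rw [← List.ofFn_eq_map, List.sum_ofFn]
  ext a
  rw [Finsupp.finsetSum_apply]
  simp [ex, Finsupp.single_apply]

lemma indep (hq : Q ≠ 0) (aw : Equiv.Perm (Fin N) → CH K M N V Q) (haw : IsAW K M N V Q aw) :
    LinearIndependent K (fun p : (Fin N → Fin M) × Equiv.Perm (Fin N) =>
        (List.ofFn fun i : Fin N => murphy K M N V Q i ^ (p.1 i).1).prod * aw p.2) := by
  let φ : CH K M N V Q →ₗ[K] VV K N :=
    (WW K N (M - 1)).subtype ∘ₗ (LinearMap.applyₗ ⟨dl 1, dl_mem 1 _⟩) ∘ₗ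
      (rep K M N V Q).toLinearMap
  apply LinearIndependent.of_comp φ
  have e : (φ ∘ fun p : (Fin N → Fin M) × Equiv.Perm (Fin N) =>
        (List.ofFn fun i : Fin N => murphy K M N V Q i ^ (p.1 i).1).prod * aw p.2) =
      fun p => mo (ex p.1) p.2 := by
    funext p
    have h1 : φ ((List.ofFn fun i : Fin N => murphy K M N V Q i ^ (p.1 i).1).prod * aw p.2) =
      ((rep K M N V Q ((List.ofFn fun i : Fin N => murphy K M N V Q i ^ (p.1 i).1).prod * aw p.2)
        ⟨dl 1, dl_mem 1 _⟩ : WW K N (M - 1)) : VV K N) := rfl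
    rw [Function.comp_apply, h1, map_mul, Module.End.mul_apply, List.ofFn_eq_map,
      rep_list hq p.1 _ (List.nodup_finRange N) p.2, sum_ex]
    rw [rep_aw haw, dl_eq_mo]
  rw [e, Fintype.linearIndependent_iff]
  intro c hc p
  have h2 := congrArg (coeff (ex p.1)) (congrFun hc p.2)
  rw [Finset.sum_apply, coeff_sum, Finset.sum_eq_single p] at h2
  · simpa [mo] using h2
  · intro b _ hb
    rw [Pi.smul_apply, coeff_smul, mo]
    by_cases hw : p.2 = b.2
    · rw [hw, Pi.single_eq_same, coeff_monomial, if_neg, smul_zero]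
      intro he
      apply hb
      refine Prod.ext ?_ hw.symm
      funext i
      have := DFunLike.congr_fun he i
      exact Fin.ext (by simpa [ex] using this)
    · rw [Pi.single_eq_of_ne hw, coeff_zero, smul_zero]
  · intro h; exact absurd (Finset.mem_univ _) h
end Indep

section Span
open MvPolynomial
variable {K : Type} [Field K] {M N : ℕ} {V : Fin M → K} {Q : K}

variable (K M N V Q) in
/-- the quotient map -/
def mkC : FreeAlgebra K (Fin N) →ₐ[K] CH K M N V Q := RingQuot.mkAlgHom K (Rel K M N V Q)

lemma mkC_rel {x y : FreeAlgebra K (Fin N)} (h : Rel K M N V Q x y) :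
    mkC K M N V Q x = mkC K M N V Q y := RingQuot.mkAlgHom_rel K h

lemma mkC_surj : Function.Surjective (mkC K M N V Q) := RingQuot.mkAlgHom_surjective K _

variable [NeZero N]

lemma mkC_ι (i : Fin N) : mkC K M N V Q (FreeAlgebra.ι K i) = gen K M N V Q i.1 := by
  have hi : ((i.1 : ℕ) : Fin N) = i := Fin.ext (cast_val_lt i.2)
  rw [gen, hi]; rfl

lemma gen_eq (t : ℕ) : gen K M N V Q t = mkC K M N V Q (FreeAlgebra.ι K (t : Fin N)) := rfl

lemma gen_quad {t : ℕ} (ht : t + 1 < N) :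
    gen K M N V Q (t + 1) * gen K M N V Q (t + 1) =
      (Q - 1) • gen K M N V Q (t + 1) + Q • (1 : CH K M N V Q) := by
  have h := mkC_rel (Rel.quad (k := K) (v := V) (q := Q) ((t + 1 : ℕ) : Fin N)
    (by rw [cast_val_lt ht]; omega))
  rw [map_mul, map_sub, map_add, map_one, map_zero, AlgHom.commutes, ← gen_eq] at h
  rw [Algebra.algebraMap_eq_smul_one, sub_mul, mul_add, mul_one, smul_mul_assoc, one_mul,
    smul_add] at h
  rw [sub_smul, one_smul, ← sub_eq_zero, ← h]
  abel

lemma gen_braid0 (ht : 1 < N) :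
    gen K M N V Q 0 * gen K M N V Q 1 * gen K M N V Q 0 * gen K M N V Q 1 =
    gen K M N V Q 1 * gen K M N V Q 0 * gen K M N V Q 1 * gen K M N V Q 0 := by
  have h := mkC_rel (Rel.braid0 (k := K) (v := V) (q := Q) ((0 : ℕ) : Fin N) ((1 : ℕ) : Fin N)
    (cast_val_lt (by omega)) (cast_val_lt ht))
  simpa only [map_mul, ← gen_eq] using h

lemma gen_comm {s t : ℕ} (hst : s + 2 ≤ t) (ht : t < N) :
    Commute (gen K M N V Q s) (gen K M N V Q t) := by
  have h := mkC_rel (Rel.comm (k := K) (v := V) (q := Q) (s : Fin N) (t : Fin N)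
    (by rw [cast_val_lt ht, cast_val_lt (by omega)]; exact hst))
  simp only [map_mul, ← gen_eq] at h
  exact h

lemma gen_braid {s : ℕ} (hs : 1 ≤ s) (ht : s + 1 < N) :
    gen K M N V Q (s + 1) * gen K M N V Q s * gen K M N V Q (s + 1) =
    gen K M N V Q s * gen K M N V Q (s + 1) * gen K M N V Q s := by
  have h := mkC_rel (Rel.braid (k := K) (v := V) (q := Q) (s : Fin N) ((s + 1 : ℕ) : Fin N)
    (by rw [cast_val_lt (by omega)]; exact hs) (succ_val ht))
  simpa only [map_mul, ← gen_eq] using h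

lemma gen_cyclo : Polynomial.aeval (gen K M N V Q 0) (gp V) = 0 := by
  have h := mkC_rel (Rel.cyclo (k := K) (v := V) (q := Q) ((0 : ℕ) : Fin N)
    (cast_val_lt (Nat.pos_of_ne_zero (NeZero.ne N))))
  rw [map_list_prod, List.map_ofFn, map_zero] at h
  rw [aeval_gp, ← h]
  simp [Function.comp_def, gen_eq]

lemma murphyAux_succ (t : ℕ) : murphyAux K M N V Q (t + 1) =
  Q⁻¹ • (gen K M N V Q (t + 1) * murphyAux K M N V Q t * gen K M N V Q (t + 1)) := rfl

lemma gen_far {s t : ℕ} (h : t + 2 ≤ s) (hs : s < N) :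
    Commute (gen K M N V Q s) (murphyAux K M N V Q t) := by
  induction t with
  | zero => exact (gen_comm h hs).symm
  | succ t ih =>
    have h1 : Commute (gen K M N V Q s) (gen K M N V Q (t + 1)) := (gen_comm h hs).symm
    exact ((h1.mul_right (ih (by omega))).mul_right h1).smul_right _

lemma gen_near {s t : ℕ} (hs : 1 ≤ s) (h : s < t) (ht : t < N) :
    Commute (gen K M N V Q s) (murphyAux K M N V Q t) := by
  induction t, h using Nat.le_induction with
  | base =>
    obtain ⟨r, rfl⟩ : ∃ r, s = r + 1 := ⟨s - 1, by omega⟩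
    rw [Nat.succ_eq_add_one, murphyAux_succ, murphyAux_succ]
    have hb := gen_braid (K := K) (M := M) (V := V) (Q := Q) hs ht
    have hc := gen_far (K := K) (M := M) (V := V) (Q := Q) (t := r) (s := r + 1 + 1) (by omega) ht
    generalize gen K M N V Q (r + 1 + 1) = B at *
    generalize gen K M N V Q (r + 1) = A at *
    generalize murphyAux K M N V Q r = L at *
    rw [mul_smul_comm, smul_mul_assoc]
    refine (Commute.smul_right ?_ _).smul_right _
    have hc' : B * L = L * B := hc
    show A * (B * (A * L * A) * B) = B * (A * L * A) * B * A
    calc A * (B * (A * L * A) * B) = (A * B * A) * L * A * B := by simp only [mul_assoc]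
      _ = B * A * (B * L) * A * B := by rw [← hb]; simp only [mul_assoc]
      _ = B * A * L * (B * A * B) := by rw [hc']; simp only [mul_assoc]
      _ = B * (A * L * A) * B * A := by rw [hb]; simp only [mul_assoc]
  | succ t h ih =>
    have h1 : Commute (gen K M N V Q s) (gen K M N V Q (t + 1)) := gen_comm (by omega) ht
    exact ((h1.mul_right (ih (by omega))).mul_right h1).smul_right _

lemma gen_zero_comm {t : ℕ} (h : 1 ≤ t) (ht : t < N) :
    Commute (gen K M N V Q 0) (murphyAux K M N V Q t) := by
  induction t, h using Nat.le_induction with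
  | base =>
    refine Commute.smul_right ?_ _
    have := gen_braid0 (K := K) (M := M) (V := V) (Q := Q) ht
    show gen K M N V Q 0 * (gen K M N V Q 1 * gen K M N V Q 0 * gen K M N V Q 1) =
      gen K M N V Q 1 * gen K M N V Q 0 * gen K M N V Q 1 * gen K M N V Q 0
    rw [← this]; simp only [mul_assoc]
  | succ t h ih =>
    have h1 : Commute (gen K M N V Q 0) (gen K M N V Q (t + 1)) := gen_comm (by omega) ht
    exact ((h1.mul_right (ih (by omega))).mul_right h1).smul_right _

lemma murphy_lt_comm {s t : ℕ} (h : s < t) (ht : t < N) :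
    Commute (murphyAux K M N V Q s) (murphyAux K M N V Q t) := by
  induction s with
  | zero => exact gen_zero_comm h ht
  | succ s ih =>
    have h1 : Commute (gen K M N V Q (s + 1)) (murphyAux K M N V Q t) := gen_near (by omega) h ht
    exact ((h1.mul_left (ih (by omega))).mul_left h1).smul_left _

lemma murphy_comm (i j : Fin N) : Commute (murphy K M N V Q i) (murphy K M N V Q j) := by
  rcases lt_trichotomy i j with h | h | h
  · exact murphy_lt_comm h j.2
  · rw [h]
  · exact (murphy_lt_comm h i.2).symm

lemma bern_l (hq : Q ≠ 0) {t : ℕ} (ht : t + 1 < N) :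
    gen K M N V Q (t + 1) * murphyAux K M N V Q t =
      murphyAux K M N V Q (t + 1) * gen K M N V Q (t + 1) - (Q - 1) • murphyAux K M N V Q (t + 1) := by
  have h := gen_quad (K := K) (M := M) (V := V) (Q := Q) ht
  rw [murphyAux_succ]
  generalize gen K M N V Q (t + 1) = T at *
  rw [smul_mul_assoc, mul_assoc (T * _) T T, h, mul_add, mul_smul_comm, mul_smul_comm, mul_one,
    smul_add, smul_smul Q⁻¹ Q, inv_mul_cancel₀ hq, one_smul, smul_comm]
  abel

lemma bern_r (hq : Q ≠ 0) {t : ℕ} (ht : t + 1 < N) :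
    gen K M N V Q (t + 1) * murphyAux K M N V Q (t + 1) =
      murphyAux K M N V Q t * gen K M N V Q (t + 1) + (Q - 1) • murphyAux K M N V Q (t + 1) := by
  have h := gen_quad (K := K) (M := M) (V := V) (Q := Q) ht
  rw [murphyAux_succ]
  generalize gen K M N V Q (t + 1) = T at *
  rw [mul_smul_comm, ← mul_assoc, ← mul_assoc, h, add_mul, add_mul, smul_mul_assoc, smul_mul_assoc,
    smul_mul_assoc, smul_mul_assoc, one_mul,
    smul_add, smul_smul Q⁻¹ Q, inv_mul_cancel₀ hq, one_smul, smul_comm]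
  abel

variable (K M N V Q) in
/-- ordered monomials in the Murphy elements -/
def Em (s : Fin N →₀ ℕ) : CH K M N V Q :=
  (List.ofFn fun i : Fin N => murphy K M N V Q i ^ s i).prod

lemma Em_list (s : Fin N →₀ ℕ) (i : Fin N) (l : List (Fin N)) (hl : l.Nodup) :
    (l.map fun j => murphy K M N V Q j ^ ((Finsupp.single i 1 + s : Fin N →₀ ℕ) j)).prod =
      if i ∈ l then murphy K M N V Q i * (l.map fun j => murphy K M N V Q j ^ s j).prod
      else (l.map fun j => murphy K M N V Q j ^ s j).prod := by
  induction l with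
  | nil => simp
  | cons j l ih =>
    rw [List.nodup_cons] at hl
    rw [List.map_cons, List.prod_cons, ih hl.2, List.map_cons, List.prod_cons]
    by_cases hji : i = j
    · subst hji
      rw [if_neg hl.1, if_pos (by simp), Finsupp.add_apply, Finsupp.single_eq_same, add_comm,
        pow_succ', mul_assoc]
    · rw [Finsupp.add_apply, Finsupp.single_eq_of_ne (Ne.symm hji), zero_add]
      by_cases hi : i ∈ l
      · rw [if_pos hi, if_pos (by simp [hi]), ← mul_assoc, ← mul_assoc,
          ((murphy_comm i j).pow_right (s j)).eq]
      · rw [if_neg hi, if_neg (by simp [hi, hji])]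

lemma Em_add (s : Fin N →₀ ℕ) (i : Fin N) :
    Em K M N V Q (Finsupp.single i 1 + s) = murphy K M N V Q i * Em K M N V Q s := by
  rw [Em, Em, List.ofFn_eq_map, List.ofFn_eq_map, Em_list s i _ (List.nodup_finRange N),
    if_pos (List.mem_finRange i)]

variable (K M N V Q) in
/-- evaluation of polynomials at the Murphy elements -/
def Ph : MvPolynomial (Fin N) K →ₗ[K] CH K M N V Q :=
  (basisMonomials (Fin N) K).constr K (Em K M N V Q)

lemma Ph_monomial (s : Fin N →₀ ℕ) (c : K) :
    Ph K M N V Q (monomial s c) = c • Em K M N V Q s := by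
  have h1 : Ph K M N V Q (monomial s 1) = Em K M N V Q s := by
    have := (basisMonomials (Fin N) K).constr_basis K (Em K M N V Q) s
    rw [coe_basisMonomials] at this
    exact this
  have : (monomial s c : MvPolynomial (Fin N) K) = c • monomial s 1 := by
    rw [smul_monomial, smul_eq_mul, mul_one]
  rw [this, map_smul, h1]

lemma Ph_X (i : Fin N) (f : MvPolynomial (Fin N) K) :
    Ph K M N V Q (X i * f) = murphy K M N V Q i * Ph K M N V Q f := by
  induction f using MvPolynomial.induction_on' with
  | monomial s c =>
    rw [X, monomial_mul, one_mul, Ph_monomial, Ph_monomial, Em_add, mul_smul_comm]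
  | add p r hp hr => rw [mul_add, map_add, hp, hr, map_add, mul_add]

lemma Ph_C (c : K) (f : MvPolynomial (Fin N) K) :
    Ph K M N V Q (C c * f) = c • Ph K M N V Q f := by
  rw [← smul_eq_C_mul, map_smul]

lemma Ph_one : Ph K M N V Q 1 = 1 := by
  have : (1 : MvPolynomial (Fin N) K) = monomial 0 1 := rfl
  rw [this, Ph_monomial]
  simp [Em]

lemma Ph_aeval (i : Fin N) (g : Polynomial K) (f : MvPolynomial (Fin N) K) :
    Ph K M N V Q (Polynomial.aeval (X i : MvPolynomial (Fin N) K) g * f) =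
      Polynomial.aeval (murphy K M N V Q i) g * Ph K M N V Q f := by
  induction g using Polynomial.induction_on generalizing f with
  | C a =>
    rw [Polynomial.aeval_C, Polynomial.aeval_C, MvPolynomial.algebraMap_eq, Ph_C,
      Algebra.algebraMap_eq_smul_one, smul_mul_assoc, one_mul]
  | add p r hp hr => rw [map_add, add_mul, map_add, hp, hr, map_add, add_mul]
  | monomial r a h =>
    have e1 : Polynomial.aeval (X i : MvPolynomial (Fin N) K)
        (Polynomial.C a * Polynomial.X ^ (r + 1)) =
        Polynomial.aeval (X i : MvPolynomial (Fin N) K) (Polynomial.C a * Polynomial.X ^ r) *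
          X i := by
      rw [pow_succ, ← mul_assoc, map_mul, Polynomial.aeval_X]
    have e2 : Polynomial.aeval (murphy K M N V Q i) (Polynomial.C a * Polynomial.X ^ (r + 1)) =
        Polynomial.aeval (murphy K M N V Q i) (Polynomial.C a * Polynomial.X ^ r) *
          murphy K M N V Q i := by
      rw [pow_succ, ← mul_assoc, map_mul, Polynomial.aeval_X]
    rw [e1, mul_assoc, h, Ph_X, e2, mul_assoc]

lemma gen_Ph (hq : Q ≠ 0) {t : ℕ} (ht : t + 1 < N) (f : MvPolynomial (Fin N) K) :
    gen K M N V Q (t + 1) * Ph K M N V Q f =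
      Ph K M N V Q (sw (t : Fin N) ((t + 1 : ℕ) : Fin N) f) * gen K M N V Q (t + 1) +
      (Q - 1) • Ph K M N V Q (Dd (t : Fin N) ((t + 1 : ℕ) : Fin N) f) := by
  have hne := t_ne ht
  have el : murphy K M N V Q (t : Fin N) = murphyAux K M N V Q t := by
    rw [murphy, cast_val_lt (by omega)]
  have er : murphy K M N V Q ((t + 1 : ℕ) : Fin N) = murphyAux K M N V Q (t + 1) := by
    rw [murphy, cast_val_lt ht]
  have hl := bern_l (K := K) (M := M) (V := V) hq ht
  have hr := bern_r (K := K) (M := M) (V := V) hq ht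
  rw [← el, ← er] at hl hr
  induction f using MvPolynomial.induction_on with
  | C a =>
    have h1 : Ph K M N V Q (C a) = a • 1 := by
      rw [← mul_one (C a), Ph_C, Ph_one]
    rw [sw_C, Dd_C hne, map_zero, h1, smul_zero, add_zero, mul_smul_comm, smul_mul_assoc, mul_one,
      one_mul]
  | add p r hp hr' =>
    rw [map_add, mul_add, hp, hr', map_add, map_add, Dd_add hne, map_add, add_mul, smul_add]
    abel
  | mul_X p a hp =>
    rw [mul_comm p, Ph_X, map_mul, sw_X]
    by_cases h1 : a = (t : Fin N)
    · subst h1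
      rw [Equiv.swap_apply_left, Dd_Xl hne, map_sub, Ph_X, Ph_X, Ph_X, ← mul_assoc, hl, sub_mul,
        mul_assoc, hp, mul_add, mul_smul_comm, smul_mul_assoc, smul_sub, mul_assoc]
      abel
    by_cases h2 : a = ((t + 1 : ℕ) : Fin N)
    · subst h2
      rw [Equiv.swap_apply_right, Dd_Xr hne, map_add, Ph_X, Ph_X, Ph_X, ← mul_assoc, hr, add_mul,
        mul_assoc, hp, mul_add, mul_smul_comm, smul_mul_assoc, smul_add, mul_assoc]
      abel
    · rw [Equiv.swap_apply_of_ne_of_ne h1 h2, Dd_symm_mul hne _ _ (sw_Xo _ _ _ h1 h2), Ph_X, Ph_X]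
      have hc : gen K M N V Q (t + 1) * murphy K M N V Q a =
          murphy K M N V Q a * gen K M N V Q (t + 1) := by
        have h1' : a.1 ≠ t := fun e => h1 (Fin.ext (by rw [cast_val_lt (by omega), e]))
        have h2' : a.1 ≠ t + 1 := fun e => h2 (Fin.ext (by rw [cast_val_lt ht, e]))
        rcases lt_or_ge a.1 t with h3 | h3
        · exact gen_far (by omega) ht
        · exact gen_near (by omega) (by omega) a.2
      rw [← mul_assoc, hc, mul_assoc, hp, mul_add, mul_smul_comm, mul_assoc]

lemma gen_aw_desc {aw : Equiv.Perm (Fin N) → CH K M N V Q} (haw : IsAW K M N V Q aw)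
    {t : ℕ} (ht : t + 1 < N) (w : Equiv.Perm (Fin N))
    (h : w⁻¹ ((t + 1 : ℕ) : Fin N) < w⁻¹ (t : Fin N)) :
    gen K M N V Q (t + 1) * aw w = (Q - 1) • aw w +
      Q • aw (Equiv.swap (t : Fin N) ((t + 1 : ℕ) : Fin N) * w) := by
  have h1 := aw_asc haw ht (Equiv.swap (t : Fin N) ((t + 1 : ℕ) : Fin N) * w) (by simpa using h)
  rw [Equiv.swap_mul_self_mul] at h1
  rw [h1, ← mul_assoc, gen_quad ht, add_mul, smul_mul_assoc, smul_mul_assoc, one_mul]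

/-- the span of the polynomials of small degree times the `aw w` -/
def SS (aw : Equiv.Perm (Fin N) → CH K M N V Q) : Submodule K (CH K M N V Q) :=
  Submodule.span K {x | ∃ (f : MvPolynomial (Fin N) K) (w : Equiv.Perm (Fin N)),
    Sm (M - 1) f ∧ x = Ph K M N V Q f * aw w}

lemma SS_mem (aw : Equiv.Perm (Fin N) → CH K M N V Q) {f : MvPolynomial (Fin N) K}
    (hf : Sm (M - 1) f) (w : Equiv.Perm (Fin N)) : Ph K M N V Q f * aw w ∈ SS aw :=
  Submodule.subset_span ⟨f, w, hf, rfl⟩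

lemma SS_gen [NeZero M] (hq : Q ≠ 0) {aw : Equiv.Perm (Fin N) → CH K M N V Q}
    (haw : IsAW K M N V Q aw) {t : ℕ} (ht : t < N) {x : CH K M N V Q} (hx : x ∈ SS aw) :
    gen K M N V Q t * x ∈ SS aw := by
  induction hx using Submodule.span_induction with
  | zero => rw [mul_zero]; exact Submodule.zero_mem _
  | add x y _ _ hx hy => rw [mul_add]; exact Submodule.add_mem _ hx hy
  | smul c x _ hx => rw [mul_smul_comm]; exact Submodule.smul_mem _ _ hx
  | mem x hx =>
    obtain ⟨f, w, hf, rfl⟩ := hx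
    cases t with
    | zero =>
      have hm : murphy K M N V Q ((0 : ℕ) : Fin N) = gen K M N V Q 0 := by
        rw [murphy, cast_val_lt ht]; rfl
      have e : Ph K M N V Q (Ared (M - 1) (gp V) ((0 : ℕ) : Fin N) f) =
          gen K M N V Q 0 * Ph K M N V Q f := by
        rw [Ared, map_sub, Ph_X, Ph_aeval, hm, gen_cyclo, zero_mul, sub_zero]
      rw [← mul_assoc, ← e]
      exact SS_mem aw (hf.Ared gp_monic gp_natDegree _) w
    | succ t =>
      rw [← mul_assoc, gen_Ph hq ht, add_mul, smul_mul_assoc]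
      refine Submodule.add_mem _ ?_ (Submodule.smul_mem _ _ (SS_mem aw (hf.Dd (t_ne ht)) w))
      rw [mul_assoc]
      rcases lt_or_gt_of_ne (inv_ne w (t_ne ht)) with h | h
      · rw [← aw_asc haw ht w h]
        exact SS_mem aw (hf.sw _ _) _
      · rw [gen_aw_desc haw ht w h, mul_add, mul_smul_comm, mul_smul_comm]
        exact Submodule.add_mem _ (Submodule.smul_mem _ _ (SS_mem aw (hf.sw _ _) _))
          (Submodule.smul_mem _ _ (SS_mem aw (hf.sw _ _) _))

lemma SS_top [NeZero M] (hq : Q ≠ 0) {aw : Equiv.Perm (Fin N) → CH K M N V Q}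
    (haw : IsAW K M N V Q aw) : SS aw = ⊤ := by
  have key : ∀ z : FreeAlgebra K (Fin N), ∀ x ∈ SS aw, mkC K M N V Q z * x ∈ SS aw := by
    intro z
    induction z using FreeAlgebra.induction with
    | grade0 c =>
      intro x hx
      rw [AlgHom.commutes, Algebra.algebraMap_eq_smul_one, smul_mul_assoc, one_mul]
      exact Submodule.smul_mem _ _ hx
    | grade1 i =>
      intro x hx
      rw [mkC_ι]
      exact SS_gen hq haw i.2 hx
    | mul a b ha hb =>
      intro x hx
      rw [map_mul, mul_assoc]
      exact ha _ (hb _ hx)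
    | add a b ha hb =>
      intro x hx
      rw [map_add, add_mul]
      exact Submodule.add_mem _ (ha _ hx) (hb _ hx)
  rw [eq_top_iff]
  intro y _
  obtain ⟨z, rfl⟩ := mkC_surj y
  have h1 : (1 : CH K M N V Q) ∈ SS aw := by
    have := SS_mem aw (f := 1) (fun a => by simp) 1
    rwa [Ph_one, aw_one haw, one_mul] at this
  simpa using key z 1 h1

lemma spanning [NeZero M] (hq : Q ≠ 0) (aw : Equiv.Perm (Fin N) → CH K M N V Q)
    (haw : IsAW K M N V Q aw) :
    Submodule.span K (Set.range (fun p : (Fin N → Fin M) × Equiv.Perm (Fin N) =>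
        (List.ofFn fun i : Fin N => murphy K M N V Q i ^ (p.1 i).1).prod * aw p.2)) = ⊤ := by
  rw [eq_top_iff, ← SS_top hq haw, SS, Submodule.span_le]
  rintro _ ⟨f, w, hf, rfl⟩
  rw [f.as_sum, map_sum, Finset.sum_mul]
  refine Submodule.sum_mem _ fun s hs => ?_
  rw [Ph_monomial, smul_mul_assoc]
  refine Submodule.smul_mem _ _ (Submodule.subset_span ?_)
  have hM : 0 < M := Nat.pos_of_ne_zero (NeZero.ne M)
  have hlt : ∀ i, s i < M := fun i => by
    have h1 := monomial_le_degreeOf i hs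
    have h2 := hf i
    omega
  exact ⟨(fun i => ⟨s i, hlt i⟩, w), rfl⟩
end Span

/-- The `m^n · n!` elements `L_1^{e_1} ⋯ L_n^{e_n} a_w`, where
`0 ≤ e_i < m` and `w` ranges over the symmetric group `S_n`, form a `k`-basis of the
cyclotomic Hecke algebra `H_n(v_1,…,v_m;q)`. -/
theorem murphy_perm_basis [NeZero m] [NeZero n] (hq : q ≠ 0)
    (aw : Equiv.Perm (Fin n) → CH k m n v q) (haw : IsAW k m n v q aw) :
    LinearIndependent k (fun p : (Fin n → Fin m) × Equiv.Perm (Fin n) =>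
        (List.ofFn fun i : Fin n => murphy k m n v q i ^ (p.1 i).1).prod * aw p.2) ∧
      Submodule.span k (Set.range (fun p : (Fin n → Fin m) × Equiv.Perm (Fin n) =>
        (List.ofFn fun i : Fin n => murphy k m n v q i ^ (p.1 i).1).prod * aw p.2)) = ⊤ := by
  exact ⟨indep hq aw haw, spanning hq aw haw⟩

end Cyclo
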